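/- arXiv:1202.0909 — 4 statements merged into one kernel-verified Lean document; each statement's English description precedes it below -/
import Mathlib

section
/- Let d ≥ 2 be an integer and b ∈ (0,∞). There exists a constant C, depending only on d and b, such that for all integers n ≥ d and m ≥ 2 satisfying n/m ≤ b, the standardized number W_{n,m} of urns containing exactly d balls in the uniform occupancy model satisfies sup_{z ∈ ℝ} |P(W_{n,m} ≤ z) − P(Z ≤ z)| ≤ C / σ_{n,m}. -/
open MeasureTheory ProbabilityTheory Filter

/-- The uniform occupancy model: `n` balls are placed independently and uniformly at
random into `m` urns; an outcome assigns to each ball its urn. -/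
noncomputable def occ (n m : ℕ) : Measure (Fin n → Fin m) :=
  (Fintype.card (Fin n → Fin m) : ENNReal)⁻¹ • Measure.count

/-- The number of balls in urn `i`. -/
def ballCount {n m : ℕ} (ω : Fin n → Fin m) (i : Fin m) : ℕ :=
  (Finset.univ.filter fun b => ω b = i).card

/-- The number of urns containing exactly `d` balls. -/
def urnCount (d : ℕ) {n m : ℕ} (ω : Fin n → Fin m) : ℕ :=
  (Finset.univ.filter fun i => ballCount ω i = d).card

/-- `μ_{n,m}`, the mean number of urns containing exactly `d` balls. -/
noncomputable def occMean (d n m : ℕ) : ℝ :=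
  ∫ ω, (urnCount d ω : ℝ) ∂(occ n m)

/-- `σ²_{n,m}`, the variance of the number of urns containing exactly `d` balls. -/
noncomputable def occVar (d n m : ℕ) : ℝ :=
  variance (fun ω => (urnCount d ω : ℝ)) (occ n m)

/-- `r_{n,m} = σ_{n,m} / (1 + (n/m)³)`. -/
noncomputable def occR (d n m : ℕ) : ℝ :=
  Real.sqrt (occVar d n m) / (1 + ((n : ℝ) / m) ^ 3)

/-- The standard normal distribution function `P(Z ≤ z)`. -/
noncomputable def stdGaussCDF (z : ℝ) : ℝ :=
  (gaussianReal 0 1 (Set.Iic z)).toReal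

/-- `P(W_{n,m} ≤ z) − P(Z ≤ z)`, where `W_{n,m}` is the standardized count. -/
noncomputable def occKolm (d n m : ℕ) (z : ℝ) : ℝ :=
  ((occ n m) {ω | ((urnCount d ω : ℝ) - occMean d n m) / Real.sqrt (occVar d n m) ≤ z}).toReal
    - stdGaussCDF z

/-!
Stein's method for a function `F` of independent uniform coordinates. Given two independent copies
of the coordinates, telescoping `F` along the configurations interpolating between the copies, and
exchanging the two copies of the coordinate that moves, writes the covariance of `F` and `h(F)` as
half the mean of `∑ j, D j * Δ j`, with `D j` an increment of `F` and `Δ j` an increment of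
`h(F)`. The solution of the Stein equation for `1[w ≤ z]` has a discontinuous derivative, but the
increments of this derivative are controlled by those of a bounded monotone function. Exchanging
the copies once more therefore bounds the distance to the normal law by the standard deviations of
`∑ j, D j * D' j` and `∑ j, |D j| * D' j`, with `D' j` another increment of `F`, without smoothing
the indicator.

For the urn count, an increment is at most two in absolute value and vanishes unless the old or
the new urn of the ball contains at least `d - 1` other balls. The Efron–Stein inequality then
bounds the variances of the two sums by a multiple of `m * (n / m) ^ d`. Conversely, pair up the
urns and test the count against functions that are odd under moving one ball between the two urns
of a pair, and supported where these two urns hold exactly `d` balls: by Bessel's inequality the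
variance of the count is at least a multiple of `m * (n / m) ^ d`. The ratio of the two bounds is
of order `1 / σ`.
-/

open scoped Topology BigOperators

/-! ### The standard normal distribution function and its Mills ratio -/

theorem hasDerivAt_gaussianPDFReal (μ : ℝ) (v : NNReal) (x : ℝ) :
    HasDerivAt (gaussianPDFReal μ v) (-((x - μ) / v) * gaussianPDFReal μ v x) x := by
  have hexponent : HasDerivAt (fun y : ℝ => -(y - μ) ^ 2 / (2 * v)) (-((x - μ) / v)) x := by
    refine (((((hasDerivAt_id x).sub_const μ).pow 2).neg).div_const (2 * (v : ℝ))).congr_deriv ?_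
    simp only [id, Nat.cast_ofNat, Nat.add_one_sub_one, pow_one, mul_one]
    rw [neg_div, mul_div_mul_left _ _ two_ne_zero]
  rw [gaussianPDFReal_def]
  exact (hexponent.exp.const_mul _).congr_deriv (by ring)

theorem hasDerivAt_cdf_gaussianReal (μ : ℝ) {v : NNReal} (hv : v ≠ 0) (x : ℝ) :
    HasDerivAt (cdf (gaussianReal μ v)) (gaussianPDFReal μ v x) x := by
  have hint : Integrable (gaussianPDFReal μ v) := integrable_gaussianPDFReal μ v
  have hcdf : ∀ y, cdf (gaussianReal μ v) y = ∫ t in Set.Iic y, gaussianPDFReal μ v t := by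
    intro y
    rw [cdf_eq_real, measureReal_def, gaussianReal_apply_eq_integral _ hv, ENNReal.toReal_ofReal]
    exact setIntegral_nonneg measurableSet_Iic fun t _ => gaussianPDFReal_nonneg μ v t
  have hprimitive : ∀ y, cdf (gaussianReal μ v) y =
      cdf (gaussianReal μ v) 0 + ∫ t in (0 : ℝ)..y, gaussianPDFReal μ v t := by
    intro y
    rw [hcdf, hcdf, ← intervalIntegral.integral_Iic_sub_Iic hint.integrableOn hint.integrableOn]
    ring
  rw [show ⇑(cdf (gaussianReal μ v)) = _ from funext hprimitive]
  exact (intervalIntegral.integral_hasDerivAt_right hint.intervalIntegrable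
    (stronglyMeasurable_gaussianPDFReal μ v).stronglyMeasurableAtFilter
    (hasDerivAt_gaussianPDFReal μ v x).continuousAt).const_add _

theorem stdGaussCDF_eq_cdf : stdGaussCDF = cdf (gaussianReal 0 1) := by
  funext z
  rw [cdf_eq_real]
  rfl

section StandardNormal

local notation "φ" => gaussianPDFReal 0 1
local notation "Φ" => stdGaussCDF

theorem stdGaussPDF_pos (x : ℝ) : 0 < φ x := gaussianPDFReal_pos 0 1 x one_ne_zero

theorem stdGaussPDF_neg (x : ℝ) : φ (-x) = φ x := by simp [gaussianPDFReal]

theorem hasDerivAt_stdGaussPDF (x : ℝ) : HasDerivAt φ (-x * φ x) x := by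
  simpa using hasDerivAt_gaussianPDFReal 0 1 x

theorem hasDerivAt_stdGaussCDF (x : ℝ) : HasDerivAt Φ (φ x) x := by
  rw [stdGaussCDF_eq_cdf]
  exact hasDerivAt_cdf_gaussianReal 0 one_ne_zero x

theorem stdGaussCDF_nonneg (x : ℝ) : 0 ≤ Φ x := ENNReal.toReal_nonneg

theorem stdGaussCDF_le_one (x : ℝ) : Φ x ≤ 1 := by
  rw [stdGaussCDF_eq_cdf]
  exact cdf_le_one _ x

theorem monotone_stdGaussCDF : Monotone Φ := by
  rw [stdGaussCDF_eq_cdf]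
  exact monotone_cdf _

theorem tendsto_stdGaussCDF_atBot : Tendsto Φ atBot (𝓝 0) := by
  rw [stdGaussCDF_eq_cdf]
  exact tendsto_cdf_atBot _

theorem stdGaussCDF_neg (x : ℝ) : Φ (-x) = 1 - Φ x := by
  have : NullSingletonClass (gaussianReal 0 1) := nullSingletonClass_gaussianReal one_ne_zero
  have hsymm : (gaussianReal 0 1).real (Set.Iic (-x)) = (gaussianReal 0 1).real (Set.Ici x) := by
    conv_lhs => rw [← neg_zero, ← gaussianReal_map_neg]
    rw [map_measureReal_apply measurable_neg measurableSet_Iic]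
    simp
  have hcompl := probReal_compl_eq_one_sub (μ := gaussianReal 0 1) (measurableSet_Iio (a := x))
  rw [Set.compl_Iio, ← hsymm, measureReal_congr Iio_ae_eq_Iic] at hcompl
  exact hcompl

theorem tendsto_add_mul_stdGaussPDF_atBot (a b : ℝ) :
    Tendsto (fun t => (a + b * t) * φ t) atBot (𝓝 0) := by
  have hpow : ∀ s : ℝ, Tendsto (fun t : ℝ => |t| ^ s * Real.exp (-2⁻¹ * t ^ 2)) atBot (𝓝 0) :=
    fun s => (tendsto_rpow_abs_mul_exp_neg_mul_sq_cocompact (by norm_num) s).mono_left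
      atBot_le_cocompact
  have hbound := ((hpow 0).const_mul |a|).add ((hpow 1).const_mul |b|)
  have hlim := hbound.mul_const (√(2 * Real.pi))⁻¹
  simp only [Real.rpow_zero, Real.rpow_one, mul_zero, add_zero, zero_mul] at hlim
  refine squeeze_zero_norm (fun t => ?_) hlim
  have hφ : φ t = (√(2 * Real.pi))⁻¹ * Real.exp (-2⁻¹ * t ^ 2) := by
    simp only [gaussianPDFReal, NNReal.coe_one, mul_one, sub_zero]
    congr 2
    ring
  rw [Real.norm_eq_abs, abs_mul, abs_of_pos (stdGaussPDF_pos t), hφ]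
  calc |a + b * t| * ((√(2 * Real.pi))⁻¹ * Real.exp (-2⁻¹ * t ^ 2))
      ≤ (|a| + |b| * |t|) * ((√(2 * Real.pi))⁻¹ * Real.exp (-2⁻¹ * t ^ 2)) := by
        gcongr
        exact (abs_add_le _ _).trans_eq (by rw [abs_mul])
    _ = _ := by ring

-- The left-hand side of the conclusion is `∫ t in Iic x, (a + c - t * (b + c * t)) * φ t`.
theorem mul_stdGaussCDF_add_mul_stdGaussPDF_nonneg {a b c x : ℝ}
    (h : ∀ t < x, 0 ≤ a + c - t * (b + c * t)) : 0 ≤ a * Φ x + (b + c * x) * φ x := by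
  have hderiv : ∀ t, HasDerivAt (fun t => a * Φ t + (b + c * t) * φ t)
      ((a + c - t * (b + c * t)) * φ t) t := fun t =>
    (((hasDerivAt_stdGaussCDF t).const_mul a).add
      ((((hasDerivAt_id t).const_mul c).const_add b).mul (hasDerivAt_stdGaussPDF t))).congr_deriv
      (by simp only [id]; ring)
  have hmono : MonotoneOn (fun t => a * Φ t + (b + c * t) * φ t) (Set.Iic x) := by
    refine monotoneOn_of_hasDerivWithinAt_nonneg (convex_Iic x)
      (fun t _ => (hderiv t).continuousAt.continuousWithinAt)
      (fun t _ => (hderiv t).hasDerivWithinAt) fun t ht => ?_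
    rw [interior_Iic] at ht
    exact mul_nonneg (h t ht) (stdGaussPDF_pos t).le
  have hlim : Tendsto (fun t => a * Φ t + (b + c * t) * φ t) atBot (𝓝 0) := by
    simpa using (tendsto_stdGaussCDF_atBot.const_mul a).add (tendsto_add_mul_stdGaussPDF_atBot b c)
  refine le_of_tendsto hlim ?_
  filter_upwards [eventually_le_atBot x] with t ht
  exact hmono ht Set.self_mem_Iic ht

/-- The Mills ratio of the left tail of the standard normal distribution; the Mills ratio of the
right tail at `x` is `millsRatio (-x)`. -/
noncomputable def millsRatio (x : ℝ) : ℝ := Φ x / φ x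

theorem millsRatio_nonneg (x : ℝ) : 0 ≤ millsRatio x :=
  div_nonneg (stdGaussCDF_nonneg x) (stdGaussPDF_pos x).le

theorem millsRatio_neg (x : ℝ) : millsRatio (-x) = (1 - Φ x) / φ x := by
  rw [millsRatio, stdGaussCDF_neg, stdGaussPDF_neg]

theorem hasDerivAt_millsRatio (x : ℝ) : HasDerivAt millsRatio (x * millsRatio x + 1) x := by
  have hφ := (stdGaussPDF_pos x).ne'
  refine ((hasDerivAt_stdGaussCDF x).div (hasDerivAt_stdGaussPDF x) hφ).congr_deriv ?_
  rw [millsRatio]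
  field_simp
  ring

theorem continuous_millsRatio : Continuous millsRatio :=
  continuous_iff_continuousAt.2 fun x => (hasDerivAt_millsRatio x).continuousAt

theorem neg_mul_millsRatio_le_one (x : ℝ) : -x * millsRatio x ≤ 1 := by
  have hmoment : 0 ≤ x * Φ x + (1 + 0 * x) * φ x :=
    mul_stdGaussCDF_add_mul_stdGaussPDF_nonneg fun t ht => by linarith
  rw [millsRatio, ← mul_div_assoc, div_le_one (stdGaussPDF_pos x)]
  linarith

theorem monotone_mul_millsRatio : Monotone fun x => x * millsRatio x := by
  have hderiv : ∀ x, HasDerivAt (fun x => x * millsRatio x)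
      (((x ^ 2 + 1) * Φ x + (2 * x + -1 * x) * φ x) / φ x) x := by
    intro x
    refine ((hasDerivAt_id x).mul (hasDerivAt_millsRatio x)).congr_deriv ?_
    have hφ := (stdGaussPDF_pos x).ne'
    rw [millsRatio, id]
    field_simp
    ring
  refine monotone_of_hasDerivAt_nonneg hderiv fun x => div_nonneg ?_ (stdGaussPDF_pos x).le
  exact mul_stdGaussCDF_add_mul_stdGaussPDF_nonneg fun t _ => by nlinarith [sq_nonneg (x - t)]

theorem stdGaussCDF_mul_millsRatio_neg_le {z w : ℝ} (h : z ≤ w) :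
    Φ z * millsRatio (-w) ≤ millsRatio w := by
  have hφ := stdGaussPDF_pos w
  rw [millsRatio_neg, millsRatio, mul_div_assoc']
  gcongr
  nlinarith [monotone_stdGaussCDF h, stdGaussCDF_nonneg z, stdGaussCDF_nonneg w]

end StandardNormal

/-! ### The Stein equation -/

/-- The bounded solution `f` of the Stein equation `f' w - w * f w = 1[w ≤ z] - P(Z ≤ z)`. -/
noncomputable def steinSol (z w : ℝ) : ℝ :=
  if w ≤ z then stdGaussCDF (-z) * millsRatio w else stdGaussCDF z * millsRatio (-w)

/-- The derivative of `steinSol z`, with the left derivative as its value at the kink `z`. -/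
noncomputable def steinDeriv (z w : ℝ) : ℝ :=
  w * steinSol z w + (if w ≤ z then 1 else 0) - stdGaussCDF z

/-- The bounded increasing function whose increments control those of `steinDeriv z`. -/
noncomputable def steinOsc (z w : ℝ) : ℝ :=
  w * steinSol z w - (if w ≤ z then 1 else 0)

theorem steinSol_of_le {z w : ℝ} (h : w ≤ z) :
    steinSol z w = stdGaussCDF (-z) * millsRatio w := if_pos h

theorem steinSol_of_ge {z w : ℝ} (h : z ≤ w) :
    steinSol z w = stdGaussCDF z * millsRatio (-w) := by
  rcases h.eq_or_lt with rfl | h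
  · rw [steinSol_of_le le_rfl, millsRatio_neg, stdGaussCDF_neg, millsRatio]
    ring
  · exact if_neg h.not_ge

theorem steinSol_neg_neg (z w : ℝ) : steinSol (-z) (-w) = steinSol z w := by
  rcases le_total w z with h | h
  · rw [steinSol_of_ge (neg_le_neg h), steinSol_of_le h, neg_neg]
  · rw [steinSol_of_le (neg_le_neg h), steinSol_of_ge h, neg_neg]

theorem continuous_steinSol (z : ℝ) : Continuous (steinSol z) := by
  refine Continuous.if_le (continuous_const.mul continuous_millsRatio)
    (continuous_const.mul (continuous_millsRatio.comp continuous_neg)) continuous_id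
    continuous_const ?_
  rintro w rfl
  rw [← steinSol_of_le le_rfl, ← steinSol_of_ge le_rfl]

theorem hasDerivWithinAt_steinSol (z w : ℝ) :
    HasDerivWithinAt (steinSol z)
      (w * steinSol z w + (if w < z then 1 else 0) - stdGaussCDF z) (Set.Ici w) w := by
  by_cases h : w < z
  · have hleft := ((hasDerivAt_millsRatio w).const_mul (stdGaussCDF (-z))).congr_of_eventuallyEq
      (f₁ := steinSol z) (by
        filter_upwards [eventually_le_nhds h] with y hy using steinSol_of_le hy)
    refine (hleft.congr_deriv ?_).hasDerivWithinAt
    rw [if_pos h, steinSol_of_le h.le, stdGaussCDF_neg]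
    ring
  · push Not at h
    have hright := (((hasDerivAt_millsRatio (-w)).comp w (hasDerivAt_neg w)).const_mul
      (stdGaussCDF z)).hasDerivWithinAt (s := Set.Ici w)
    refine (hright.congr (f₁ := steinSol z) (fun y hy => steinSol_of_ge (h.trans hy))
      (steinSol_of_ge h)).congr_deriv ?_
    rw [if_neg h.not_gt, steinSol_of_ge h]
    ring

theorem monotone_mul_steinSol (z : ℝ) : Monotone fun w => w * steinSol z w := by
  have hleft : ∀ z, MonotoneOn (fun w => w * steinSol z w) (Set.Iic z) := by
    intro z x hx y hy hxy
    have := mul_le_mul_of_nonneg_left (monotone_mul_millsRatio hxy) (stdGaussCDF_nonneg (-z))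
    simp only [steinSol_of_le hx, steinSol_of_le hy]
    linarith
  have hright : MonotoneOn (fun w => w * steinSol z w) (Set.Ici z) := by
    intro x hx y hy hxy
    have := hleft (-z) (Set.mem_Iic.2 (neg_le_neg hy)) (Set.mem_Iic.2 (neg_le_neg hx))
      (neg_le_neg hxy)
    simp only [steinSol_neg_neg] at this ⊢
    linarith
  exact (hleft z).Iic_union_Ici hright

theorem steinSol_nonneg (z w : ℝ) : 0 ≤ steinSol z w := by
  unfold steinSol
  split_ifs <;> exact mul_nonneg (stdGaussCDF_nonneg _) (millsRatio_nonneg _)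

theorem steinSol_le_millsRatio (z w : ℝ) : steinSol z w ≤ millsRatio w := by
  rcases le_total w z with h | h
  · rw [steinSol_of_le h]
    exact mul_le_of_le_one_left (millsRatio_nonneg w) (stdGaussCDF_le_one _)
  · rw [steinSol_of_ge h]
    exact stdGaussCDF_mul_millsRatio_neg_le h

theorem abs_mul_steinSol_le_one (z w : ℝ) : |w * steinSol z w| ≤ 1 := by
  wlog hw : w ≤ 0 generalizing z w
  · have := this (-z) (-w) (by linarith)
    rwa [steinSol_neg_neg, neg_mul, abs_neg] at this
  rw [abs_mul, abs_of_nonpos hw, abs_of_nonneg (steinSol_nonneg z w)]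
  calc -w * steinSol z w ≤ -w * millsRatio w :=
        mul_le_mul_of_nonneg_left (steinSol_le_millsRatio z w) (neg_nonneg.2 hw)
    _ ≤ 1 := neg_mul_millsRatio_le_one w

theorem abs_steinDeriv_le_two (z w : ℝ) : |steinDeriv z w| ≤ 2 := by
  have := abs_le.1 (abs_mul_steinSol_le_one z w)
  have := stdGaussCDF_nonneg z
  have := stdGaussCDF_le_one z
  rw [steinDeriv, abs_le]
  split_ifs <;> constructor <;> linarith

theorem abs_steinOsc_le_two (z w : ℝ) : |steinOsc z w| ≤ 2 := by
  have := abs_le.1 (abs_mul_steinSol_le_one z w)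
  rw [steinOsc, abs_le]
  split_ifs <;> constructor <;> linarith

theorem abs_steinSol_sub_sub_le_of_mem_Icc {z a b c : ℝ} (hc : c ∈ Set.Icc a b) :
    |steinSol z b - steinSol z a - (b - a) * steinDeriv z c| ≤
      (b - a) * (steinOsc z b - steinOsc z a) := by
  have hder : ∀ w, HasDerivWithinAt (fun w => steinSol z w - w * steinDeriv z c)
      (w * steinSol z w + (if w < z then 1 else 0) - stdGaussCDF z - 1 * steinDeriv z c)
      (Set.Ici w) w := fun w =>
    (hasDerivWithinAt_steinSol z w).sub ((hasDerivWithinAt_id w _).mul_const _)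
  have hcont : Continuous fun w => steinSol z w - w * steinDeriv z c :=
    (continuous_steinSol z).sub (continuous_id.mul continuous_const)
  have hbound : ∀ w ∈ Set.Ico a b,
      ‖w * steinSol z w + (if w < z then 1 else 0) - stdGaussCDF z - 1 * steinDeriv z c‖ ≤
        steinOsc z b - steinOsc z a := by
    rintro w ⟨haw, hwb⟩
    have : a * steinSol z a ≤ w * steinSol z w := monotone_mul_steinSol z haw
    have : w * steinSol z w ≤ b * steinSol z b := monotone_mul_steinSol z hwb.le
    have : a * steinSol z a ≤ c * steinSol z c := monotone_mul_steinSol z hc.1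
    have : c * steinSol z c ≤ b * steinSol z b := monotone_mul_steinSol z hc.2
    have := hc.1
    have := hc.2
    rw [Real.norm_eq_abs, abs_le]
    simp only [steinOsc, steinDeriv]
    split_ifs <;> constructor <;> linarith
  have hmean := norm_image_sub_le_of_norm_deriv_right_le_segment hcont.continuousOn
    (fun w _ => hder w) hbound b ⟨hc.1.trans hc.2, le_rfl⟩
  calc _ = |(steinSol z b - b * steinDeriv z c) - (steinSol z a - a * steinDeriv z c)| := by
        congr 1
        ring
    _ ≤ _ := hmean.trans_eq (mul_comm _ _)

theorem abs_steinSol_sub_sub_le (z a b : ℝ) :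
    |steinSol z b - steinSol z a - (b - a) * steinDeriv z b| ≤
      (b - a) * (steinOsc z b - steinOsc z a) := by
  rcases le_total a b with hab | hab
  · exact abs_steinSol_sub_sub_le_of_mem_Icc (Set.right_mem_Icc.2 hab)
  · rw [← abs_neg]
    convert abs_steinSol_sub_sub_le_of_mem_Icc (Set.left_mem_Icc.2 hab) using 1
    · congr 1
      ring
    · ring

/-! ### Averages over a finite type -/

section UniformVariance

variable {Ω : Type*} [Fintype Ω]

/-- The variance of a real function under the uniform distribution on a finite type. -/
noncomputable def uniformVariance (X : Ω → ℝ) : ℝ :=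
  𝔼 ω, (X ω - 𝔼 ω, X ω) ^ 2

theorem uniformVariance_const_mul (c : ℝ) (X : Ω → ℝ) :
    uniformVariance (fun ω => c * X ω) = c ^ 2 * uniformVariance X := by
  simp only [uniformVariance, ← Finset.mul_expect, ← mul_sub, mul_pow]

-- This is `0 ≤ 𝔼 (Y - 𝔼 Y - ∑ i, h i) ^ 2`, expanded.
theorem sum_expect_mul_sub_sq_le_uniformVariance {ι : Type*} [Fintype ι] (Y : Ω → ℝ)
    {h : ι → Ω → ℝ} (hmean : ∀ i, 𝔼 ω, h i ω = 0)
    (horth : ∀ i j, i ≠ j → 𝔼 ω, h i ω * h j ω = 0) :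
    ∑ i, (2 * 𝔼 ω, Y ω * h i ω - 𝔼 ω, h i ω ^ 2) ≤ uniformVariance Y := by
  have hcross : 𝔼 ω, (Y ω - 𝔼 ω, Y ω) * ∑ i, h i ω = ∑ i, 𝔼 ω, Y ω * h i ω := by
    simp only [sub_mul, Finset.expect_sub_distrib, Finset.mul_sum, Finset.expect_sum_comm,
      ← Finset.mul_expect, hmean, mul_zero, sub_zero]
  have hsquare : 𝔼 ω, (∑ i, h i ω) ^ 2 = ∑ i, 𝔼 ω, h i ω ^ 2 := by
    simp only [sq, Finset.sum_mul_sum, Finset.expect_sum_comm]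
    exact Finset.sum_congr rfl fun i _ =>
      Finset.sum_eq_single i (fun j _ hji => horth i j hji.symm) (by simp)
  have hnonneg : 0 ≤ 𝔼 ω, (Y ω - 𝔼 ω, Y ω - ∑ i, h i ω) ^ 2 :=
    Finset.expect_nonneg fun ω _ => sq_nonneg _
  simp only [sub_sq (Y _ - _), Finset.expect_add_distrib, Finset.expect_sub_distrib, mul_assoc,
    ← Finset.mul_expect, hcross, hsquare] at hnonneg
  rw [Finset.sum_sub_distrib, ← Finset.mul_sum, uniformVariance]
  linarith

theorem uniformVariance_pos {X : Ω → ℝ} {ω ω' : Ω} (h : X ω ≠ X ω') : 0 < uniformVariance X := by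
  obtain ⟨ζ, hζ⟩ : ∃ ζ, X ζ - 𝔼 ω, X ω ≠ 0 := by
    by_contra! hconst
    exact h ((sub_eq_zero.1 (hconst ω)).trans (sub_eq_zero.1 (hconst ω')).symm)
  exact Finset.expect_pos' (fun _ _ => sq_nonneg _) ⟨ζ, Finset.mem_univ ζ, by positivity⟩

variable [Nonempty Ω]

theorem uniformVariance_eq (X : Ω → ℝ) :
    uniformVariance X = 𝔼 ω, X ω ^ 2 - (𝔼 ω, X ω) ^ 2 := by
  simp only [uniformVariance, sub_sq, Finset.expect_add_distrib, Finset.expect_sub_distrib,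
    Fintype.expect_const, ← Finset.mul_expect, ← Finset.expect_mul]
  ring

theorem expect_abs_expect_sub_le_sqrt (X : Ω → ℝ) :
    𝔼 ω, |𝔼 ω', X ω' - X ω| ≤ √(uniformVariance X) := by
  apply Real.le_sqrt_of_sq_le
  calc (𝔼 ω, |𝔼 ω', X ω' - X ω|) ^ 2 ≤ 𝔼 ω, |𝔼 ω', X ω' - X ω| ^ 2 := by
        simpa using Finset.expect_mul_sq_le_sq_mul_sq Finset.univ
          (fun ω => |𝔼 ω', X ω' - X ω|) fun _ => (1 : ℝ)
    _ = uniformVariance X := by simp only [uniformVariance, sq_abs, sub_sq_comm]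

end UniformVariance

/-! ### Two independent copies of independent uniform coordinates -/

section Copies

variable {n : ℕ} {β : Fin n → Type*}

/-- Given two copies of every coordinate, the configuration whose coordinates before `k` come from
the second copy and whose other coordinates come from the first copy. It interpolates between the
first copy `hybrid 0` and the second copy `hybrid n`. -/
def hybrid (k : ℕ) (ω : ∀ i, β i × β i) (i : Fin n) : β i :=
  if (i : ℕ) < k then (ω i).2 else (ω i).1

/-- Exchange the two copies of coordinate `j`. -/
def swapAt (j : Fin n) (ω : ∀ i, β i × β i) : ∀ i, β i × β i :=
  Function.update ω j (ω j).swap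

/-- The increment of `F` at the configuration `hybrid k` when the two copies of coordinate `j` are
exchanged, that is, when coordinate `j` is resampled. -/
def swapDiff (F : (∀ i, β i) → ℝ) (k : ℕ) (j : Fin n) (ω : ∀ i, β i × β i) : ℝ :=
  F (hybrid k ω) - F (hybrid k (swapAt j ω))

/-- The sum over the coordinates of `ψ D Δ`, where `D` is the increment of `F` when the hybrid
configuration moves past a coordinate and `Δ` the increment when the first copy is resampled at that
coordinate. For `ψ D Δ = D * Δ` its mean is twice the variance of `F`. -/
def incrementSum (ψ : ℝ → ℝ → ℝ) (F : (∀ i, β i) → ℝ) (ω : ∀ i, β i × β i) : ℝ :=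
  ∑ j : Fin n, ψ (swapDiff F j j ω) (swapDiff F 0 j ω)

theorem swapAt_involutive (j : Fin n) : Function.Involutive (swapAt (β := β) j) := by
  intro ω
  simp [swapAt]

theorem hybrid_update (k : ℕ) (i : Fin n) (ω : ∀ i, β i × β i) (y : β i × β i) :
    hybrid k (Function.update ω i y) =
      Function.update (hybrid k ω) i (if (i : ℕ) < k then y.2 else y.1) := by
  funext l
  by_cases h : l = i
  · subst h
    simp [hybrid]
  · simp [hybrid, h]

theorem hybrid_swapAt (k : ℕ) (j : Fin n) (ω : ∀ i, β i × β i) :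
    hybrid k (swapAt j ω) =
      Function.update (hybrid k ω) j (if (j : ℕ) < k then (ω j).1 else (ω j).2) :=
  hybrid_update k j ω _

theorem hybrid_swapAt_self (j : Fin n) (ω : ∀ i, β i × β i) :
    hybrid j (swapAt j ω) = hybrid (j + 1) ω := by
  funext l
  by_cases h : l = j
  · subst h
    simp [hybrid, swapAt]
  · have : (l : ℕ) < j ↔ (l : ℕ) < j + 1 := by
      have : (l : ℕ) ≠ j := Fin.val_ne_of_ne h
      omega
    simp [hybrid, swapAt, h, this]

theorem swapDiff_swapAt (F : (∀ i, β i) → ℝ) (k : ℕ) (j : Fin n) (ω : ∀ i, β i × β i) :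
    swapDiff F k j (swapAt j ω) = -swapDiff F k j ω := by
  rw [swapDiff, swapDiff, swapAt_involutive]
  ring

theorem sum_swapDiff_self (F : (∀ i, β i) → ℝ) (ω : ∀ i, β i × β i) :
    ∑ j : Fin n, swapDiff F j j ω = F (hybrid 0 ω) - F (hybrid n ω) := by
  simp only [swapDiff, hybrid_swapAt_self]
  rw [Fin.sum_univ_eq_sum_range fun k => F (hybrid k ω) - F (hybrid (k + 1) ω)]
  exact Finset.sum_range_sub' (fun k => F (hybrid k ω)) n

theorem swapDiff_const_mul_sub (F : (∀ i, β i) → ℝ) (c a : ℝ) (k : ℕ) (j : Fin n)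
    (ω : ∀ i, β i × β i) :
    swapDiff (fun ξ => c * (F ξ - a)) k j ω = c * swapDiff F k j ω := by
  simp only [swapDiff]
  ring

theorem incrementSum_const_mul_sub {ψ : ℝ → ℝ → ℝ} {c : ℝ}
    (hψ : ∀ x y, ψ (c * x) (c * y) = c ^ 2 * ψ x y) (F : (∀ i, β i) → ℝ) (a : ℝ)
    (ω : ∀ i, β i × β i) :
    incrementSum ψ (fun ξ => c * (F ξ - a)) ω = c ^ 2 * incrementSum ψ F ω := by
  simp only [incrementSum, swapDiff_const_mul_sub, hψ, Finset.mul_sum]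

variable [∀ i, Fintype (β i)]

theorem expect_swapAt (j : Fin n) (g : (∀ i, β i × β i) → ℝ) :
    𝔼 ω, g (swapAt j ω) = 𝔼 ω, g ω :=
  Fintype.expect_equiv (swapAt_involutive j).toPerm _ _ fun _ => rfl

theorem expect_eq_zero_of_swapAt {j : Fin n} {A : (∀ i, β i × β i) → ℝ}
    (hA : ∀ ω, A (swapAt j ω) = -A ω) : 𝔼 ω, A ω = 0 := by
  have hswap := expect_swapAt j A
  simp only [hA, Finset.expect_neg_distrib] at hswap
  linarith

theorem expect_mul_sub_swapAt {j : Fin n} {A : (∀ i, β i × β i) → ℝ}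
    (hA : ∀ ω, A (swapAt j ω) = -A ω) (g : (∀ i, β i × β i) → ℝ) :
    𝔼 ω, A ω * (g ω - g (swapAt j ω)) = 2 * 𝔼 ω, A ω * g ω := by
  have hswap := expect_swapAt j fun ω => A ω * g ω
  simp only [hA, neg_mul, Finset.expect_neg_distrib] at hswap
  simp only [mul_sub, Finset.expect_sub_distrib]
  linarith

theorem expect_hybrid_zero_hybrid_card (g : (∀ i, β i) → (∀ i, β i) → ℝ) :
    𝔼 ω : ∀ i, β i × β i, g (hybrid 0 ω) (hybrid n ω) = 𝔼 ξ, 𝔼 ξ', g ξ ξ' := by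
  rw [← Finset.expect_product', Finset.univ_product_univ]
  refine Fintype.expect_equiv (Equiv.arrowProdEquivProdArrow (Fin n) β β) _ _ fun ω => ?_
  congr 1
  simp [funext_iff, hybrid]

theorem expect_update_swap (i : Fin n) (g : (∀ i, β i) → β i → ℝ) :
    𝔼 ξ, 𝔼 y, g (Function.update ξ i y) (ξ i) = 𝔼 ξ, 𝔼 y, g ξ y := by
  have hinv : Function.Involutive fun p : (∀ i, β i) × β i =>
      (Function.update p.1 i p.2, p.1 i) := by
    rintro ⟨ξ, y⟩
    simp
  rw [← Finset.expect_product', ← Finset.expect_product', Finset.univ_product_univ]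
  exact Fintype.expect_equiv hinv.toPerm _ _ fun _ => rfl

theorem expect_swapDiff_eq_expect_swapDiff_zero (ψ : ℝ → ℝ) (F : (∀ i, β i) → ℝ) (k : ℕ)
    (j : Fin n) : 𝔼 ω, ψ (swapDiff F k j ω) = 𝔼 ω, ψ (swapDiff F 0 j ω) := by
  have hinv : Function.Involutive fun (ω : ∀ i, β i × β i) (i : Fin n) =>
      if (i : ℕ) < k then (ω i).swap else ω i := by
    intro ω
    funext i
    by_cases h : (i : ℕ) < k <;> simp [h]
  refine Fintype.expect_equiv hinv.toPerm _ _ fun ω => ?_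
  have hhybrid : hybrid 0 (hinv.toPerm _ ω) = hybrid k ω := by
    funext i
    by_cases h : (i : ℕ) < k <;> simp [h, hybrid]
  have hswap : hybrid 0 (swapAt j (hinv.toPerm _ ω)) = hybrid k (swapAt j ω) := by
    rw [hybrid_swapAt, hybrid_swapAt, hhybrid]
    by_cases h : (j : ℕ) < k <;> simp [h]
  rw [swapDiff, swapDiff, hhybrid, hswap]

theorem abs_expect_stein_remainder_le (F : (∀ i, β i) → ℝ) (z : ℝ) (j : Fin n) :
    |𝔼 ω, swapDiff F j j ω * (swapDiff (fun ξ => steinSol z (F ξ)) 0 j ω -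
        swapDiff F 0 j ω * steinDeriv z (F (hybrid 0 ω)))| ≤
      2 * 𝔼 ω, |swapDiff F j j ω| * swapDiff F 0 j ω * steinOsc z (F (hybrid 0 ω)) := by
  have hodd : ∀ ω, |swapDiff F j j (swapAt j ω)| * swapDiff F 0 j (swapAt j ω) =
      -(|swapDiff F j j ω| * swapDiff F 0 j ω) := fun ω => by
    rw [swapDiff_swapAt, swapDiff_swapAt, abs_neg, mul_neg]
  rw [← expect_mul_sub_swapAt hodd fun ω => steinOsc z (F (hybrid 0 ω))]
  refine (Finset.abs_expect_le _ _).trans (Finset.expect_le_expect fun ω _ => ?_)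
  rw [abs_mul, mul_assoc]
  exact mul_le_mul_of_nonneg_left (abs_steinSol_sub_sub_le z _ _) (abs_nonneg _)

theorem abs_sum_expect_stein_remainder_le (F : (∀ i, β i) → ℝ) (z : ℝ) :
    |∑ j : Fin n, 𝔼 ω, swapDiff F j j ω * (swapDiff (fun ξ => steinSol z (F ξ)) 0 j ω -
        swapDiff F 0 j ω * steinDeriv z (F (hybrid 0 ω)))| ≤
      4 * 𝔼 ω, |incrementSum (|·| * ·) F ω| := by
  calc _ ≤ ∑ j : Fin n,
        2 * 𝔼 ω, |swapDiff F j j ω| * swapDiff F 0 j ω * steinOsc z (F (hybrid 0 ω)) :=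
        (Finset.abs_sum_le_sum_abs _ _).trans
          (Finset.sum_le_sum fun j _ => abs_expect_stein_remainder_le F z j)
    _ = 2 * 𝔼 ω, incrementSum (|·| * ·) F ω * steinOsc z (F (hybrid 0 ω)) := by
        simp only [incrementSum, Finset.sum_mul, Finset.expect_sum_comm, ← Finset.mul_sum]
    _ ≤ 2 * 𝔼 ω, |incrementSum (|·| * ·) F ω| * 2 := by
        refine mul_le_mul_of_nonneg_left (Finset.expect_le_expect fun ω _ => ?_) two_pos.le
        refine (le_abs_self _).trans ?_
        rw [abs_mul]
        exact mul_le_mul_of_nonneg_left (abs_steinOsc_le_two _ _) (abs_nonneg _)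
    _ = _ := by
        rw [← Finset.expect_mul]
        ring

variable [∀ i, Nonempty (β i)]

theorem expect_update (i : Fin n) (g : (∀ i, β i) → ℝ) :
    𝔼 ξ, 𝔼 y, g (Function.update ξ i y) = 𝔼 ξ, g ξ := by
  simpa using expect_update_swap i fun ξ _ => g ξ

theorem expect_mul_eq_expect_mul_expect_update {l : Fin n} {A : (∀ i, β i) → ℝ}
    (hA : DependsOn A {l}ᶜ) (g : (∀ i, β i) → ℝ) :
    𝔼 ξ, A ξ * g ξ = 𝔼 ξ, A ξ * 𝔼 y, g (Function.update ξ l y) := by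
  rw [← expect_update l]
  refine Finset.expect_congr rfl fun ξ _ => ?_
  rw [Finset.mul_expect]
  exact Finset.expect_congr rfl fun y _ => by
    rw [hA fun k hk => Function.update_of_ne hk y ξ]

theorem expect_hybrid_zero (g : (∀ i, β i) → ℝ) :
    𝔼 ω : ∀ i, β i × β i, g (hybrid 0 ω) = 𝔼 ξ, g ξ := by
  rw [expect_hybrid_zero_hybrid_card fun ξ _ => g ξ]
  simp

theorem expect_swapDiff (ψ : ℝ → ℝ) (F : (∀ i, β i) → ℝ) (k : ℕ) (j : Fin n) :
    𝔼 ω, ψ (swapDiff F k j ω) = 𝔼 ξ, 𝔼 y, ψ (F ξ - F (Function.update ξ j y)) := by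
  rw [expect_swapDiff_eq_expect_swapDiff_zero]
  have hcopies : ∀ ω : ∀ i, β i × β i, ψ (swapDiff F 0 j ω) =
      ψ (F (hybrid 0 ω) - F (Function.update (hybrid 0 ω) j (hybrid n ω j))) := by
    intro ω
    rw [swapDiff, hybrid_swapAt]
    simp [hybrid]
  simp only [hcopies]
  rw [expect_hybrid_zero_hybrid_card fun ξ ξ' => ψ (F ξ - F (Function.update ξ j (ξ' j)))]
  refine Finset.expect_congr rfl fun ξ _ => ?_
  rw [← expect_update j]
  simp

-- Telescope `F ξ - F ξ'` along the hybrids, then exchange the two copies of each coordinate.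
theorem covariance_eq_sum_expect_swapDiff_mul (F h : (∀ i, β i) → ℝ) :
    𝔼 ξ, F ξ * h ξ - (𝔼 ξ, F ξ) * 𝔼 ξ, h ξ =
      (∑ j : Fin n, 𝔼 ω, swapDiff F j j ω * swapDiff h 0 j ω) / 2 := by
  have hcopies : 𝔼 ξ, F ξ * h ξ - (𝔼 ξ, F ξ) * 𝔼 ξ, h ξ =
      𝔼 ω : ∀ i, β i × β i, (F (hybrid 0 ω) - F (hybrid n ω)) * h (hybrid 0 ω) := by
    rw [expect_hybrid_zero_hybrid_card fun ξ ξ' => (F ξ - F ξ') * h ξ]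
    simp_rw [← Finset.expect_mul, Finset.expect_sub_distrib, sub_mul,
      Finset.expect_sub_distrib, ← Finset.mul_expect, Fintype.expect_const]
  have hswap : ∀ j : Fin n, 𝔼 ω, swapDiff F j j ω * swapDiff h 0 j ω =
      2 * 𝔼 ω, swapDiff F j j ω * h (hybrid 0 ω) := fun j =>
    expect_mul_sub_swapAt (swapDiff_swapAt F j j) fun ω => h (hybrid 0 ω)
  simp only [hcopies, ← sum_swapDiff_self, Finset.sum_mul, Finset.expect_sum_comm, hswap,
    ← Finset.mul_sum]
  ring

theorem uniformVariance_eq_expect_incrementSum (F : (∀ i, β i) → ℝ) :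
    uniformVariance F = (𝔼 ω, incrementSum (· * ·) F ω) / 2 := by
  have hcov := covariance_eq_sum_expect_swapDiff_mul F F
  simp only [← sq] at hcov
  simp only [uniformVariance_eq, hcov, incrementSum, Finset.expect_sum_comm]

/-- The Efron–Stein inequality. -/
theorem uniformVariance_le_sum_expect_update_sq (F : (∀ i, β i) → ℝ) :
    uniformVariance F ≤ (∑ i, 𝔼 ξ, 𝔼 y, (F ξ - F (Function.update ξ i y)) ^ 2) / 2 := by
  simp only [uniformVariance_eq_expect_incrementSum, incrementSum, Finset.expect_sum_comm]
  gcongr with i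
  calc 𝔼 ω, swapDiff F i i ω * swapDiff F 0 i ω
      ≤ 𝔼 ω, (swapDiff F i i ω ^ 2 + swapDiff F 0 i ω ^ 2) / 2 :=
        Finset.expect_le_expect fun ω _ => by
          linarith [two_mul_le_add_sq (swapDiff F i i ω) (swapDiff F 0 i ω)]
    _ = 𝔼 ξ, 𝔼 y, (F ξ - F (Function.update ξ i y)) ^ 2 := by
        rw [← Finset.expect_div, Finset.expect_add_distrib, expect_swapDiff (· ^ 2),
          expect_swapDiff (· ^ 2), add_self_div_two]

/-! ### Stein's method for functions of independent uniform coordinates -/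

theorem expect_indicator_sub_stdGaussCDF_eq {F : (∀ i, β i) → ℝ} (hF : 𝔼 ξ, F ξ = 0) (z : ℝ) :
    𝔼 ξ, (if F ξ ≤ z then 1 else 0) - stdGaussCDF z =
      𝔼 ω, steinDeriv z (F (hybrid 0 ω)) * (1 - incrementSum (· * ·) F ω / 2) -
        (∑ j : Fin n, 𝔼 ω, swapDiff F j j ω * (swapDiff (fun ξ => steinSol z (F ξ)) 0 j ω -
          swapDiff F 0 j ω * steinDeriv z (F (hybrid 0 ω)))) / 2 := by
  have hstein : 𝔼 ξ, (if F ξ ≤ z then (1 : ℝ) else 0) - stdGaussCDF z =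
      𝔼 ω, steinDeriv z (F (hybrid 0 ω)) - 𝔼 ξ, F ξ * steinSol z (F ξ) := by
    rw [expect_hybrid_zero fun ξ => steinDeriv z (F ξ)]
    simp only [steinDeriv, Finset.expect_sub_distrib, Finset.expect_add_distrib,
      Fintype.expect_const]
    ring
  have hcov := covariance_eq_sum_expect_swapDiff_mul F fun ξ => steinSol z (F ξ)
  rw [hF, zero_mul, sub_zero] at hcov
  have hmain : 𝔼 ω, steinDeriv z (F (hybrid 0 ω)) * incrementSum (· * ·) F ω =
      ∑ j : Fin n, 𝔼 ω, swapDiff F j j ω * (swapDiff F 0 j ω * steinDeriv z (F (hybrid 0 ω))) := by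
    simp only [incrementSum, Finset.mul_sum, Finset.expect_sum_comm]
    exact Finset.sum_congr rfl fun j _ => Finset.expect_congr rfl fun ω _ => by ring
  rw [hstein, hcov]
  simp only [mul_sub, mul_one, Finset.expect_sub_distrib, Finset.sum_sub_distrib, ← mul_div_assoc,
    ← Finset.expect_div, hmain]
  ring

theorem abs_expect_indicator_sub_stdGaussCDF_le {F : (∀ i, β i) → ℝ} (hF : 𝔼 ξ, F ξ = 0) (z : ℝ) :
    |𝔼 ξ, (if F ξ ≤ z then 1 else 0) - stdGaussCDF z| ≤
      2 * 𝔼 ω, |1 - incrementSum (· * ·) F ω / 2| + 2 * 𝔼 ω, |incrementSum (|·| * ·) F ω| := by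
  rw [expect_indicator_sub_stdGaussCDF_eq hF]
  refine (abs_sub _ _).trans (add_le_add ?_ ?_)
  · rw [Finset.mul_expect]
    refine (Finset.abs_expect_le _ _).trans (Finset.expect_le_expect fun ω _ => ?_)
    rw [abs_mul]
    exact mul_le_mul_of_nonneg_right (abs_steinDeriv_le_two _ _) (abs_nonneg _)
  · rw [abs_div, abs_two, div_le_iff₀ two_pos]
    exact (abs_sum_expect_stein_remainder_le F z).trans_eq (by ring)

theorem abs_expect_indicator_sub_stdGaussCDF_le_sqrt {F : (∀ i, β i) → ℝ} (hF : 𝔼 ξ, F ξ = 0)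
    (hvar : uniformVariance F = 1) (z : ℝ) :
    |𝔼 ξ, (if F ξ ≤ z then 1 else 0) - stdGaussCDF z| ≤
      √(uniformVariance (incrementSum (· * ·) F)) +
        2 * √(uniformVariance (incrementSum (|·| * ·) F)) := by
  have hmean : 𝔼 ω, incrementSum (· * ·) F ω = 2 := by
    linarith [uniformVariance_eq_expect_incrementSum F]
  have hmean_abs : 𝔼 ω, incrementSum (|·| * ·) F ω = 0 := by
    simp only [incrementSum, Finset.expect_sum_comm]
    refine Finset.sum_eq_zero fun j _ => expect_eq_zero_of_swapAt (j := j) fun ω => ?_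
    rw [swapDiff_swapAt, swapDiff_swapAt, abs_neg, mul_neg]
  have hsum := expect_abs_expect_sub_le_sqrt (incrementSum (· * ·) F)
  have hsum_abs := expect_abs_expect_sub_le_sqrt (incrementSum (|·| * ·) F)
  simp only [hmean_abs, zero_sub, abs_neg] at hsum_abs
  have hhalf : 2 * 𝔼 ω, |1 - incrementSum (· * ·) F ω / 2| =
      𝔼 ω, |𝔼 ω', incrementSum (· * ·) F ω' - incrementSum (· * ·) F ω| := by
    rw [Finset.mul_expect, hmean]
    refine Finset.expect_congr rfl fun ω _ => ?_
    rw [← abs_two, ← abs_mul, abs_two]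
    congr 1
    ring
  linarith [abs_expect_indicator_sub_stdGaussCDF_le hF z]

theorem abs_expect_standardized_indicator_sub_stdGaussCDF_le {G : (∀ i, β i) → ℝ}
    (hG : 0 < uniformVariance G) (z : ℝ) :
    |𝔼 ξ, (if (G ξ - 𝔼 ξ', G ξ') / √(uniformVariance G) ≤ z then 1 else 0) - stdGaussCDF z| ≤
      (√(uniformVariance (incrementSum (· * ·) G)) +
        2 * √(uniformVariance (incrementSum (|·| * ·) G))) / uniformVariance G := by
  set c := (√(uniformVariance G))⁻¹ with hc
  set F : (∀ i, β i) → ℝ := fun ξ => c * (G ξ - 𝔼 ξ', G ξ') with hFdef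
  have hc0 : 0 ≤ c := by positivity
  have hcsq : c ^ 2 = (uniformVariance G)⁻¹ := by rw [hc, inv_pow, Real.sq_sqrt hG.le]
  have hF : 𝔼 ξ, F ξ = 0 := by
    simp only [hFdef, ← Finset.mul_expect, Finset.expect_sub_distrib, Fintype.expect_const,
      sub_self, mul_zero]
  have hvar : uniformVariance F = 1 := by
    simp only [uniformVariance, hF, sub_zero]
    simp only [hFdef, mul_pow, ← Finset.mul_expect, hcsq]
    exact inv_mul_cancel₀ hG.ne'
  have hscale : ∀ ψ : ℝ → ℝ → ℝ, (∀ x y, ψ (c * x) (c * y) = c ^ 2 * ψ x y) →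
      √(uniformVariance (incrementSum ψ F)) =
        √(uniformVariance (incrementSum ψ G)) / uniformVariance G := by
    intro ψ hψ
    have hsum : incrementSum ψ F = fun ω => c ^ 2 * incrementSum ψ G ω :=
      funext (incrementSum_const_mul_sub hψ G _)
    rw [hsum, uniformVariance_const_mul, Real.sqrt_mul (by positivity),
      Real.sqrt_sq (by positivity), hcsq, inv_mul_eq_div]
  have hbound := abs_expect_indicator_sub_stdGaussCDF_le_sqrt hF hvar z
  rw [hscale _ fun x y => by ring, hscale _ fun x y => by rw [abs_mul, abs_of_nonneg hc0]; ring]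
    at hbound
  simp only [hFdef, hc, inv_mul_eq_div] at hbound
  exact hbound.trans_eq (by ring)

end Copies

/-! ### Locality of the urn count -/

section Locality

variable {n m : ℕ}

/-- The number of urns containing exactly `d` balls, as a real function on the allocations. -/
abbrev realUrnCount (d : ℕ) (X : Fin n → Fin m) : ℝ :=
  urnCount d X

theorem ballCount_update_of_ne {X : Fin n → Fin m} {j : Fin n} {q u : Fin m} (hX : u ≠ X j)
    (hq : u ≠ q) : ballCount (Function.update X j q) u = ballCount X u := by
  refine congrArg Finset.card (Finset.filter_congr fun l _ => ?_)
  by_cases hl : l = j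
  · subst hl
    simp [hX.symm, hq.symm]
  · simp [hl]

theorem realUrnCount_eq_sum (d : ℕ) (X : Fin n → Fin m) :
    realUrnCount d X = ∑ u, if ballCount X u = d then 1 else 0 := by
  simp [realUrnCount, urnCount]

theorem realUrnCount_sub_update (d : ℕ) (X : Fin n → Fin m) (j : Fin n) (q : Fin m) :
    realUrnCount d X - realUrnCount d (Function.update X j q) =
      ∑ u ∈ {X j, q}, ((if ballCount X u = d then 1 else 0) -
        if ballCount (Function.update X j q) u = d then 1 else 0) := by
  rw [realUrnCount_eq_sum, realUrnCount_eq_sum, ← Finset.sum_sub_distrib]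
  refine (Finset.sum_subset (Finset.subset_univ _) fun u _ hu => ?_).symm
  simp only [Finset.mem_insert, Finset.mem_singleton, not_or] at hu
  rw [ballCount_update_of_ne hu.1 hu.2, sub_self]

theorem abs_realUrnCount_sub_update_le_two (d : ℕ) (X : Fin n → Fin m) (j : Fin n) (q : Fin m) :
    |realUrnCount d X - realUrnCount d (Function.update X j q)| ≤ 2 := by
  rw [realUrnCount_sub_update]
  calc _ ≤ ∑ _u ∈ {X j, q}, (1 : ℝ) :=
        (Finset.abs_sum_le_sum_abs _ _).trans (Finset.sum_le_sum fun _ _ => by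
          split_ifs <;> norm_num)
    _ ≤ 2 := by
        rw [Finset.sum_const, nsmul_one]
        exact_mod_cast Finset.card_le_two

theorem pred_le_card_filter_erase_of_ballCount_eq {d : ℕ} {X : Fin n → Fin m} {u : Fin m}
    (hX : ballCount X u = d) (j : Fin n) :
    d - 1 ≤ ((Finset.univ.erase j).filter fun l => X l = u).card := by
  rw [Finset.filter_erase, ← hX]
  exact Finset.pred_card_le_card_erase

theorem exists_powersetCard_of_realUrnCount_sub_update_ne_zero {d : ℕ} {X : Fin n → Fin m}
    {j : Fin n} {q : Fin m} (h : realUrnCount d X - realUrnCount d (Function.update X j q) ≠ 0) :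
    ∃ K ∈ (Finset.univ.erase j).powersetCard (d - 1), ∃ u ∈ ({X j, q} : Finset (Fin m)),
      ∀ l ∈ K, X l = u := by
  rw [realUrnCount_sub_update] at h
  obtain ⟨u, hu, hne⟩ := Finset.exists_ne_zero_of_sum_ne_zero h
  have hcard : d - 1 ≤ ((Finset.univ.erase j).filter fun l => X l = u).card := by
    by_cases hX : ballCount X u = d
    · exact pred_le_card_filter_erase_of_ballCount_eq hX j
    · have hupdate : ballCount (Function.update X j q) u = d := by
        by_contra hupdate
        simp [hX, hupdate] at hne
      refine (pred_le_card_filter_erase_of_ballCount_eq hupdate j).trans_eq ?_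
      refine congrArg Finset.card (Finset.filter_congr fun l hl => ?_)
      rw [Function.update_of_ne (Finset.ne_of_mem_erase hl)]
  obtain ⟨K, hK, hKcard⟩ := Finset.exists_subset_card_eq hcard
  exact ⟨K, Finset.mem_powersetCard.2 ⟨hK.trans (Finset.filter_subset _ _), hKcard⟩, u, hu,
    fun l hl => (Finset.mem_filter.1 (hK hl)).2⟩

theorem realUrnCount_update_sub_update_update (d : ℕ) {X : Fin n → Fin m} {i j : Fin n}
    (hij : j ≠ i) {q r : Fin m} (hdisj : Disjoint ({X j, q} : Finset (Fin m)) {X i, r}) :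
    realUrnCount d (Function.update X i r) -
        realUrnCount d (Function.update (Function.update X i r) j q) =
      realUrnCount d X - realUrnCount d (Function.update X j q) := by
  rw [realUrnCount_sub_update, realUrnCount_sub_update, Function.update_of_ne hij]
  refine Finset.sum_congr rfl fun u hu => ?_
  have hne : u ≠ X i ∧ u ≠ r := by
    simpa only [Finset.mem_insert, Finset.mem_singleton, not_or] using
      Finset.disjoint_left.1 hdisj hu
  rw [Function.update_comm hij.symm, ballCount_update_of_ne hne.1 hne.2,
    ballCount_update_of_ne (by rw [Function.update_of_ne hij.symm]; exact hne.1) hne.2]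

theorem abs_swapDiff_realUrnCount_le_two (d k : ℕ) (j : Fin n) (ω : Fin n → Fin m × Fin m) :
    |swapDiff (realUrnCount d) k j ω| ≤ 2 := by
  rw [swapDiff, hybrid_swapAt]
  exact abs_realUrnCount_sub_update_le_two _ _ _ _

/-- The urns visited by either copy of ball `i`, before or after the pair `ω i` is replaced by
`y`. -/
def zone (i : Fin n) (ω : Fin n → Fin m × Fin m) (y : Fin m × Fin m) : Finset (Fin m) :=
  {(ω i).1, (ω i).2, y.1, y.2}

/-- A copy of ball `j` visits the zone of ball `i`. -/
def Touches (i : Fin n) (ω : Fin n → Fin m × Fin m) (y : Fin m × Fin m) (j : Fin n) : Prop :=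
  (ω j).1 ∈ zone i ω y ∨ (ω j).2 ∈ zone i ω y

instance (i : Fin n) (ω : Fin n → Fin m × Fin m) (y : Fin m × Fin m) (j : Fin n) :
    Decidable (Touches i ω y j) :=
  inferInstanceAs (Decidable (_ ∨ _))

theorem touches_self (i : Fin n) (ω : Fin n → Fin m × Fin m) (y : Fin m × Fin m) :
    Touches i ω y i := by
  simp [Touches, zone]

theorem touches_update_iff (i : Fin n) (ω : Fin n → Fin m × Fin m) (y : Fin m × Fin m)
    (j : Fin n) : Touches i (Function.update ω i y) (ω i) j ↔ Touches i ω y j := by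
  by_cases hij : j = i
  · subst hij
    simp only [touches_self]
  · simp only [Touches, zone, Function.update_of_ne hij, Function.update_self, Finset.mem_insert,
      Finset.mem_singleton]
    tauto

theorem swapDiff_realUrnCount_update (d k : ℕ) {i j : Fin n} {ω : Fin n → Fin m × Fin m}
    {y : Fin m × Fin m} (h : ¬Touches i ω y j) :
    swapDiff (realUrnCount d) k j (Function.update ω i y) = swapDiff (realUrnCount d) k j ω := by
  have hij : j ≠ i := by
    rintro rfl
    exact h (touches_self _ _ _)
  simp only [swapDiff, hybrid_swapAt, hybrid_update, Function.update_of_ne hij]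
  apply realUrnCount_update_sub_update_update d hij
  simp only [Touches, zone, Finset.mem_insert, Finset.mem_singleton, not_or] at h
  rw [Finset.disjoint_left]
  simp only [hybrid, Finset.mem_insert, Finset.mem_singleton]
  split_ifs <;> grind

/-- The number of balls touching the zone of ball `i` for which exchanging the two copies changes
the urn count. -/
noncomputable def influence (d : ℕ) (i : Fin n) (ω : Fin n → Fin m × Fin m)
    (y : Fin m × Fin m) : ℝ :=
  ∑ j, if swapDiff (realUrnCount d) 0 j ω ≠ 0 ∧ Touches i ω y j then 1 else 0

theorem abs_apply_swapDiff_realUrnCount_le {ψ : ℝ → ℝ → ℝ} (hψ : ∀ x y, |ψ x y| ≤ |x| * |y|)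
    (d : ℕ) (j : Fin n) (ω : Fin n → Fin m × Fin m) :
    |ψ (swapDiff (realUrnCount d) j j ω) (swapDiff (realUrnCount d) 0 j ω)| ≤
      4 * if swapDiff (realUrnCount d) 0 j ω ≠ 0 then 1 else 0 := by
  refine (hψ _ _).trans ?_
  split_ifs with h
  · calc _ ≤ (2 : ℝ) * 2 := by
          gcongr <;> exact abs_swapDiff_realUrnCount_le_two _ _ _ _
      _ = 4 * 1 := by norm_num
  · rw [not_ne_iff.1 h, abs_zero, mul_zero, mul_zero]

theorem abs_incrementSum_sub_update_le {ψ : ℝ → ℝ → ℝ} (hψ : ∀ x y, |ψ x y| ≤ |x| * |y|)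
    (d : ℕ) (i : Fin n) (ω : Fin n → Fin m × Fin m) (y : Fin m × Fin m) :
    |incrementSum ψ (realUrnCount d) ω -
        incrementSum ψ (realUrnCount d) (Function.update ω i y)| ≤
      4 * influence d i ω y + 4 * influence d i (Function.update ω i y) (ω i) := by
  simp only [incrementSum, influence, touches_update_iff]
  rw [← Finset.sum_sub_distrib, Finset.mul_sum, Finset.mul_sum, ← Finset.sum_add_distrib]
  refine (Finset.abs_sum_le_sum_abs _ _).trans (Finset.sum_le_sum fun j _ => ?_)
  by_cases htouch : Touches i ω y j
  · simp only [htouch, and_true]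
    exact (abs_sub _ _).trans (add_le_add (abs_apply_swapDiff_realUrnCount_le hψ d j _)
      (abs_apply_swapDiff_realUrnCount_le hψ d j _))
  · simp only [swapDiff_realUrnCount_update d _ htouch, sub_self, abs_zero]
    positivity

end Locality

/-! ### Second moment of the influence -/

section Influence

variable {n m : ℕ}

/-- The indicator of `Touches`. -/
noncomputable def touchInd (i : Fin n) (y : Fin m × Fin m) (j : Fin n)
    (ω : Fin n → Fin m × Fin m) : ℝ :=
  if Touches i ω y j then 1 else 0

/-- The indicator that every ball of `K` has its first copy in the urn chosen by `s` among the two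
urns of ball `j`. -/
noncomputable def shares (s : Fin m × Fin m → Fin m) (j : Fin n) (K : Finset (Fin n))
    (ω : Fin n → Fin m × Fin m) : ℝ :=
  ∏ l ∈ K, if (ω l).1 = s (ω j) then 1 else 0

/-- The number of pairs of a ball `j` touching the zone of ball `i` and a set of `d - 1` other balls
sharing the urn of `j`. -/
noncomputable def shareTouchCount (d : ℕ) (i : Fin n) (y : Fin m × Fin m)
    (s : Fin m × Fin m → Fin m) (ω : Fin n → Fin m × Fin m) : ℝ :=
  ∑ j, ∑ K ∈ (Finset.univ.erase j).powersetCard (d - 1), shares s j K ω * touchInd i y j ω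

theorem touchInd_nonneg (i : Fin n) (y : Fin m × Fin m) (j : Fin n)
    (ω : Fin n → Fin m × Fin m) : 0 ≤ touchInd i y j ω := by
  unfold touchInd
  positivity

theorem touchInd_le_one (i : Fin n) (y : Fin m × Fin m) (j : Fin n)
    (ω : Fin n → Fin m × Fin m) : touchInd i y j ω ≤ 1 := by
  unfold touchInd
  split_ifs <;> norm_num

theorem dependsOn_touchInd (i : Fin n) (y : Fin m × Fin m) (j : Fin n) :
    DependsOn (touchInd i y j) {i, j} := by
  intro ω ω' h
  refine if_congr ?_ rfl rfl
  simp only [Touches, zone, h i (by simp), h j (by simp)]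

theorem shares_nonneg (s : Fin m × Fin m → Fin m) (j : Fin n) (K : Finset (Fin n))
    (ω : Fin n → Fin m × Fin m) : 0 ≤ shares s j K ω :=
  Finset.prod_nonneg fun _ _ => by positivity

theorem shares_eq_one {s : Fin m × Fin m → Fin m} {j : Fin n} {K : Finset (Fin n)}
    {ω : Fin n → Fin m × Fin m} (h : ∀ l ∈ K, (ω l).1 = s (ω j)) : shares s j K ω = 1 :=
  Finset.prod_eq_one fun l hl => if_pos (h l hl)

theorem dependsOn_shares (s : Fin m × Fin m → Fin m) (j : Fin n) (K : Finset (Fin n)) :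
    DependsOn (shares s j K) (insert j K : Finset (Fin n)) := by
  intro ω ω' h
  refine Finset.prod_congr rfl fun l hl => ?_
  rw [h l (by simp [hl]), h j (by simp)]

theorem shareTouchCount_nonneg (d : ℕ) (i : Fin n) (y : Fin m × Fin m)
    (s : Fin m × Fin m → Fin m) (ω : Fin n → Fin m × Fin m) : 0 ≤ shareTouchCount d i y s ω :=
  Finset.sum_nonneg fun _ _ => Finset.sum_nonneg fun _ _ =>
    mul_nonneg (shares_nonneg _ _ _ _) (touchInd_nonneg _ _ _ _)

theorem influence_nonneg (d : ℕ) (i : Fin n) (ω : Fin n → Fin m × Fin m) (y : Fin m × Fin m) :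
    0 ≤ influence d i ω y :=
  Finset.sum_nonneg fun _ _ => by positivity

theorem influence_le_sum_touchInd (d : ℕ) (i : Fin n) (ω : Fin n → Fin m × Fin m)
    (y : Fin m × Fin m) : influence d i ω y ≤ ∑ j, touchInd i y j ω := by
  refine Finset.sum_le_sum fun j _ => ?_
  unfold touchInd
  split_ifs <;> simp_all

theorem ite_swapDiff_realUrnCount_ne_zero_le (d : ℕ) (j : Fin n) (ω : Fin n → Fin m × Fin m) :
    (if swapDiff (realUrnCount d) 0 j ω ≠ 0 then 1 else 0) ≤
      ∑ K ∈ (Finset.univ.erase j).powersetCard (d - 1),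
        (shares Prod.fst j K ω + shares Prod.snd j K ω) := by
  have hnonneg : ∀ K, 0 ≤ shares Prod.fst j K ω + shares Prod.snd j K ω := fun K =>
    add_nonneg (shares_nonneg _ _ _ _) (shares_nonneg _ _ _ _)
  split_ifs with h
  · rw [swapDiff, hybrid_swapAt] at h
    obtain ⟨K, hK, u, hu, hKu⟩ := exists_powersetCard_of_realUrnCount_sub_update_ne_zero h
    refine le_trans ?_ (Finset.single_le_sum (fun K _ => hnonneg K) hK)
    simp only [hybrid, not_lt_zero, if_false, Finset.mem_insert, Finset.mem_singleton] at hu hKu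
    rcases hu with rfl | rfl
    · exact (shares_eq_one hKu).ge.trans (le_add_of_nonneg_right (shares_nonneg _ _ _ _))
    · exact (shares_eq_one hKu).ge.trans (le_add_of_nonneg_left (shares_nonneg _ _ _ _))
  · exact Finset.sum_nonneg fun K _ => hnonneg K

theorem influence_le_shareTouchCount_add (d : ℕ) (i : Fin n) (ω : Fin n → Fin m × Fin m)
    (y : Fin m × Fin m) :
    influence d i ω y ≤
      shareTouchCount d i y Prod.fst ω + shareTouchCount d i y Prod.snd ω := by
  have hinfluence : influence d i ω y =
      ∑ j, (if swapDiff (realUrnCount d) 0 j ω ≠ 0 then 1 else 0) * touchInd i y j ω := by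
    simp only [influence, touchInd, ite_and, ite_mul, one_mul, zero_mul]
  simp only [hinfluence, shareTouchCount, ← Finset.sum_mul, ← Finset.sum_add_distrib, ← add_mul]
  exact Finset.sum_le_sum fun j _ => mul_le_mul_of_nonneg_right
    (ite_swapDiff_realUrnCount_ne_zero_le d j ω) (touchInd_nonneg _ _ _ _)

variable [NeZero m]

theorem expect_ite_fst_eq (u : Fin m) :
    𝔼 x : Fin m × Fin m, (if x.1 = u then (1 : ℝ) else 0) = 1 / m := by
  rw [← Finset.univ_product_univ, Finset.expect_product, Finset.expect_comm]
  simp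

theorem expect_ite_snd_eq (u : Fin m) :
    𝔼 x : Fin m × Fin m, (if x.2 = u then (1 : ℝ) else 0) = 1 / m := by
  rw [← Finset.univ_product_univ, Finset.expect_product]
  simp

theorem expect_ite_mem_or_mem_le (τ : Finset (Fin m)) :
    𝔼 x : Fin m × Fin m, (if x.1 ∈ τ ∨ x.2 ∈ τ then (1 : ℝ) else 0) ≤ 2 * τ.card / m := by
  calc _ ≤ 𝔼 x : Fin m × Fin m, ∑ u ∈ τ,
        ((if x.1 = u then (1 : ℝ) else 0) + if x.2 = u then 1 else 0) := by
        refine Finset.expect_le_expect fun x _ => ?_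
        simp only [Finset.sum_add_distrib, Finset.sum_ite_eq]
        split_ifs <;> simp_all
    _ = ∑ u ∈ τ, (1 / m + 1 / m : ℝ) := by
        simp only [Finset.expect_sum_comm, Finset.expect_add_distrib, expect_ite_fst_eq,
          expect_ite_snd_eq]
    _ = 2 * τ.card / m := by
        rw [Finset.sum_const, nsmul_eq_mul]
        ring

theorem expect_touchInd_update_le {i k : Fin n} (hk : k ≠ i) (y : Fin m × Fin m)
    (ω : Fin n → Fin m × Fin m) :
    𝔼 x, touchInd i y k (Function.update ω k x) ≤ 8 / m := by
  have hzone : ((zone i ω y).card : ℝ) ≤ 4 := by exact_mod_cast Finset.card_le_four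
  calc 𝔼 x, touchInd i y k (Function.update ω k x)
      = 𝔼 x : Fin m × Fin m, (if x.1 ∈ zone i ω y ∨ x.2 ∈ zone i ω y then 1 else 0) := by
        refine Finset.expect_congr rfl fun x _ => if_congr ?_ rfl rfl
        simp only [Touches, zone, Function.update_self, Function.update_of_ne hk.symm]
    _ ≤ 2 * (zone i ω y).card / m := expect_ite_mem_or_mem_le _
    _ ≤ 2 * 4 / m := by gcongr
    _ = 8 / m := by norm_num

theorem expect_mul_touchInd_le {A : (Fin n → Fin m × Fin m) → ℝ} (hA : ∀ ω, 0 ≤ A ω)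
    {S : Finset (Fin n)} (hAS : DependsOn A S) {i : Fin n} (hi : i ∈ S) (y : Fin m × Fin m)
    (k : Fin n) :
    𝔼 ω, A ω * touchInd i y k ω ≤ ((if k ∈ S then 1 else 0) + 8 / m) * 𝔼 ω, A ω := by
  split_ifs with hk
  · calc 𝔼 ω, A ω * touchInd i y k ω ≤ 𝔼 ω, A ω := Finset.expect_le_expect fun ω _ =>
          mul_le_of_le_one_right (hA ω) (touchInd_le_one _ _ _ _)
      _ ≤ _ := le_mul_of_one_le_left (Finset.expect_nonneg fun ω _ => hA ω)
          (le_add_of_nonneg_right (by positivity))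
  · have hki : k ≠ i := fun h => hk (h ▸ hi)
    rw [zero_add, mul_comm, Finset.expect_mul, expect_mul_eq_expect_mul_expect_update
      (hAS.mono fun l hl => by rintro rfl; exact hk hl)]
    exact Finset.expect_le_expect fun ω _ =>
      mul_le_mul_of_nonneg_left (expect_touchInd_update_le hki y ω) (hA ω)

theorem expect_mul_sum_touchInd_le {A : (Fin n → Fin m × Fin m) → ℝ} (hA : ∀ ω, 0 ≤ A ω)
    {S : Finset (Fin n)} (hAS : DependsOn A S) {i : Fin n} (hi : i ∈ S) (y : Fin m × Fin m) :
    𝔼 ω, A ω * ∑ k, touchInd i y k ω ≤ (S.card + 8 * (n / m)) * 𝔼 ω, A ω := by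
  simp only [Finset.mul_sum, Finset.expect_sum_comm]
  calc _ ≤ ∑ k : Fin n, ((if k ∈ S then 1 else 0) + 8 / m) * 𝔼 ω, A ω :=
        Finset.sum_le_sum fun k _ => expect_mul_touchInd_le hA hAS hi y k
    _ = (S.card + 8 * (n / m)) * 𝔼 ω, A ω := by
        rw [← Finset.sum_mul, Finset.sum_add_distrib, Finset.sum_boole, Finset.filter_univ_mem,
          Finset.sum_const, Finset.card_univ, Fintype.card_fin, nsmul_eq_mul]
        ring

theorem expect_mul_shares (s : Fin m × Fin m → Fin m) {j : Fin n} {K : Finset (Fin n)}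
    (hj : j ∉ K) {B : (Fin n → Fin m × Fin m) → ℝ} (hB : DependsOn B (K : Set (Fin n))ᶜ) :
    𝔼 ω, B ω * shares s j K ω = (1 / m : ℝ) ^ K.card * 𝔼 ω, B ω := by
  induction K using Finset.induction_on with
  | empty => simp [shares]
  | insert l K hl ih =>
    obtain ⟨hjl, hjK⟩ := not_or.1 (Finset.mem_insert.not.1 hj)
    have hsplit : ∀ ω, B ω * shares s j (insert l K) ω =
        (B ω * shares s j K ω) * if (ω l).1 = s (ω j) then 1 else 0 := fun ω => by
      rw [shares, Finset.prod_insert hl, shares]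
      ring
    have hdepends : DependsOn (fun ω => B ω * shares s j K ω) {l}ᶜ := by
      intro ω ω' h
      dsimp only
      rw [hB fun k hk => h k fun hkl => hk (by simp_all),
        dependsOn_shares s j K fun k hk => h k fun hkl => by simp_all]
    have hcoord : ∀ ω : Fin n → Fin m × Fin m,
        𝔼 x, (if (Function.update ω l x l).1 = s (Function.update ω l x j) then (1 : ℝ) else 0) =
          1 / m := fun ω => by
      simpa only [Function.update_self, Function.update_of_ne hjl] using expect_ite_fst_eq _
    simp only [hsplit]
    rw [expect_mul_eq_expect_mul_expect_update hdepends]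
    simp only [hcoord]
    rw [← Finset.expect_mul, ih hjK (hB.mono (Set.compl_subset_compl.2 (by simp))),
      Finset.card_insert_of_notMem hl, pow_succ]
    ring

theorem expect_shares_mul_touchInd_le (s : Fin m × Fin m → Fin m) (i : Fin n)
    (y : Fin m × Fin m) {j : Fin n} {K : Finset (Fin n)} (hj : j ∉ K) :
    𝔼 ω, shares s j K ω * touchInd i y j ω ≤
      (1 / m : ℝ) ^ K.card * ((if j = i then 1 else 0) + (if i ∈ K then 1 else 0) + 8 / m) := by
  by_cases hi : i ∈ K
  · calc 𝔼 ω, shares s j K ω * touchInd i y j ω ≤ 𝔼 ω, 1 * shares s j K ω :=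
          Finset.expect_le_expect fun ω _ => (mul_le_of_le_one_right (shares_nonneg _ _ _ _)
            (touchInd_le_one _ _ _ _)).trans_eq (one_mul _).symm
      _ = (1 / m : ℝ) ^ K.card * 1 := by
          rw [expect_mul_shares s hj ((dependsOn_const 1).mono (Set.empty_subset _)),
            Fintype.expect_const]
      _ ≤ _ := by
          gcongr
          rw [if_pos hi, add_right_comm]
          exact le_add_of_nonneg_left (by positivity)
  · have hdepends : DependsOn (touchInd i y j) (K : Set (Fin n))ᶜ :=
      (dependsOn_touchInd i y j).mono fun l hl => by
        rcases hl with rfl | rfl <;> simpa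
    have htouch := expect_mul_touchInd_le (S := {i}) (fun _ => zero_le_one)
      ((dependsOn_const 1).mono (Set.empty_subset _)) (Finset.mem_singleton_self i) y j
    simp only [one_mul, Fintype.expect_const, mul_one, Finset.mem_singleton] at htouch
    rw [Finset.expect_congr rfl fun ω _ => mul_comm (shares s j K ω) _,
      expect_mul_shares s hj hdepends, if_neg hi, add_zero]
    gcongr

theorem card_filter_mem_powersetCard_le {α : Type*} [DecidableEq α] (s : Finset α) (a : α)
    (r : ℕ) : ((s.powersetCard r).filter fun K => a ∈ K).card ≤ s.card ^ (r - 1) := by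
  calc _ ≤ (s.powersetCard (r - 1)).card := by
        refine Finset.card_le_card_of_injOn (fun K => K.erase a) (fun K hK => ?_)
          fun K hK L hL h => ?_
        · simp only [Finset.coe_filter, Set.mem_ofPred_eq, Finset.mem_powersetCard] at hK
          simp [Finset.mem_powersetCard, Finset.card_erase_of_mem hK.2, hK.1.2,
            (Finset.erase_subset _ _).trans hK.1.1]
        · simp only [Finset.coe_filter, Set.mem_ofPred_eq] at hK hL
          rw [← Finset.insert_erase hK.2, ← Finset.insert_erase hL.2]
          exact congrArg (insert a) h
    _ ≤ s.card ^ (r - 1) := by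
        rw [Finset.card_powersetCard]
        exact Nat.choose_le_pow _ _

theorem sum_powersetCard_erase_incidence_le (i : Fin n) {r : ℕ} (hr : 1 ≤ r) {c : ℝ}
    (hc : 0 ≤ c) :
    ∑ j : Fin n, ∑ K ∈ (Finset.univ.erase j).powersetCard r,
      ((if j = i then 1 else 0) + (if i ∈ K then 1 else 0) + c) ≤
      (2 + c * n) * (n : ℝ) ^ r := by
  have hle : ∀ j : Fin n, (Finset.univ.erase j).card ≤ n := fun j =>
    (Finset.card_le_univ _).trans_eq (Fintype.card_fin n)
  have hcard : ∀ j : Fin n, (((Finset.univ.erase j).powersetCard r).card : ℝ) ≤ (n : ℝ) ^ r := by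
    intro j
    rw [Finset.card_powersetCard]
    exact_mod_cast (Nat.choose_le_pow _ _).trans (Nat.pow_le_pow_left (hle j) r)
  have hmem : ∀ j : Fin n, ∑ K ∈ (Finset.univ.erase j).powersetCard r,
      (if i ∈ K then (1 : ℝ) else 0) ≤ (n : ℝ) ^ (r - 1) := by
    intro j
    rw [Finset.sum_boole]
    exact_mod_cast (card_filter_mem_powersetCard_le _ i r).trans
      (Nat.pow_le_pow_left (hle j) (r - 1))
  calc _ ≤ ∑ j : Fin n, ((if j = i then (n : ℝ) ^ r else 0) + (n : ℝ) ^ (r - 1) +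
        c * (n : ℝ) ^ r) := by
        refine Finset.sum_le_sum fun j _ => ?_
        simp only [Finset.sum_add_distrib, Finset.sum_const, nsmul_eq_mul, mul_ite, mul_one,
          mul_zero, mul_comm _ c]
        gcongr
        · split_ifs
          · exact hcard j
          · exact le_rfl
        · exact hmem j
        · exact hcard j
    _ = _ := by
        simp only [Finset.sum_add_distrib, Finset.sum_ite_eq', Finset.mem_univ, if_true,
          Finset.sum_const, Finset.card_univ, Fintype.card_fin, nsmul_eq_mul]
        rw [← pow_succ', Nat.sub_add_cancel hr]
        ring

theorem expect_shareTouchCount_le {d : ℕ} (hd : 2 ≤ d) (i : Fin n) (y : Fin m × Fin m)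
    (s : Fin m × Fin m → Fin m) :
    𝔼 ω, shareTouchCount d i y s ω ≤ (2 + 8 * (n / m)) * ((n : ℝ) / m) ^ (d - 1) := by
  simp only [shareTouchCount, Finset.expect_sum_comm]
  calc _ ≤ ∑ j : Fin n, ∑ K ∈ (Finset.univ.erase j).powersetCard (d - 1), (1 / m : ℝ) ^ (d - 1) *
        ((if j = i then 1 else 0) + (if i ∈ K then 1 else 0) + 8 / m) := by
        refine Finset.sum_le_sum fun j _ => Finset.sum_le_sum fun K hK => ?_
        rw [Finset.mem_powersetCard] at hK
        rw [← hK.2]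
        exact expect_shares_mul_touchInd_le s i y fun hj => Finset.notMem_erase _ _ (hK.1 hj)
    _ ≤ (1 / m : ℝ) ^ (d - 1) * ((2 + 8 / m * n) * (n : ℝ) ^ (d - 1)) := by
        simp only [← Finset.mul_sum]
        gcongr
        exact sum_powersetCard_erase_incidence_le i (by omega) (by positivity)
    _ = _ := by
        rw [div_pow, div_pow, one_pow]
        ring

theorem expect_shareTouchCount_mul_sum_touchInd_le {d : ℕ} (hd : 1 ≤ d) (i : Fin n)
    (y : Fin m × Fin m) (s : Fin m × Fin m → Fin m) :
    𝔼 ω, shareTouchCount d i y s ω * ∑ k, touchInd i y k ω ≤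
      (d + 1 + 8 * (n / m)) * 𝔼 ω, shareTouchCount d i y s ω := by
  simp only [shareTouchCount, Finset.sum_mul, Finset.expect_sum_comm]
  simp only [Finset.mul_sum _ _ (_ + _)]
  refine Finset.sum_le_sum fun j _ => Finset.sum_le_sum fun K hK => ?_
  have hnonneg : ∀ ω : Fin n → Fin m × Fin m, 0 ≤ shares s j K ω * touchInd i y j ω := fun ω =>
    mul_nonneg (shares_nonneg _ _ _ _) (touchInd_nonneg _ _ _ _)
  have hdepends : DependsOn (fun ω => shares s j K ω * touchInd i y j ω)
      (insert i (insert j K) : Finset (Fin n)) := fun ω ω' h => by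
    dsimp only
    rw [dependsOn_shares s j K fun k hk => h k (Finset.mem_insert_of_mem hk),
      dependsOn_touchInd i y j fun k hk => h k (by rcases hk with rfl | rfl <;> simp)]
  have hcard : ((insert i (insert j K)).card : ℝ) ≤ d + 1 := by
    have hK' := (Finset.mem_powersetCard.1 hK).2
    have := (Finset.card_insert_le i (insert j K)).trans
      (Nat.succ_le_succ (Finset.card_insert_le j K))
    exact_mod_cast this.trans (by omega)
  refine (expect_mul_sum_touchInd_le hnonneg hdepends (Finset.mem_insert_self _ _) y).trans ?_
  exact mul_le_mul_of_nonneg_right (by linarith) (Finset.expect_nonneg fun ω _ => hnonneg ω)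

theorem expect_influence_sq_le {d : ℕ} (hd : 2 ≤ d) (i : Fin n) (y : Fin m × Fin m) :
    𝔼 ω, influence d i ω y ^ 2 ≤
      2 * ((d + 1 + 8 * (n / m)) * ((2 + 8 * (n / m)) * ((n : ℝ) / m) ^ (d - 1))) := by
  have hshare : ∀ s : Fin m × Fin m → Fin m,
      𝔼 ω, shareTouchCount d i y s ω * ∑ k, touchInd i y k ω ≤
        (d + 1 + 8 * (n / m)) * ((2 + 8 * (n / m)) * ((n : ℝ) / m) ^ (d - 1)) := fun s =>
    (expect_shareTouchCount_mul_sum_touchInd_le (by omega) i y s).trans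
      (mul_le_mul_of_nonneg_left (expect_shareTouchCount_le hd i y s) (by positivity))
  calc 𝔼 ω, influence d i ω y ^ 2
      ≤ 𝔼 ω, (shareTouchCount d i y Prod.fst ω + shareTouchCount d i y Prod.snd ω) *
          ∑ k, touchInd i y k ω := Finset.expect_le_expect fun ω _ => by
        rw [sq]
        exact mul_le_mul (influence_le_shareTouchCount_add d i ω y)
          (influence_le_sum_touchInd d i ω y) (influence_nonneg d i ω y)
          (add_nonneg (shareTouchCount_nonneg d i y _ ω) (shareTouchCount_nonneg d i y _ ω))
    _ ≤ _ := by
        simp only [add_mul (shareTouchCount _ _ _ _ _), Finset.expect_add_distrib, two_mul]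
        exact add_le_add (hshare _) (hshare _)

theorem uniformVariance_incrementSum_le {d : ℕ} (hd : 2 ≤ d) {ψ : ℝ → ℝ → ℝ}
    (hψ : ∀ x y, |ψ x y| ≤ |x| * |y|) :
    uniformVariance (fun ω : Fin n → Fin m × Fin m => incrementSum ψ (realUrnCount d) ω) ≤
      64 * (d + 1 + 8 * (n / m)) * (2 + 8 * (n / m)) * (m * ((n : ℝ) / m) ^ d) := by
  have hm : (m : ℝ) ≠ 0 := Nat.cast_ne_zero.2 (NeZero.ne m)
  set R : ℝ := 2 * ((d + 1 + 8 * (n / m)) * ((2 + 8 * (n / m)) * ((n : ℝ) / m) ^ (d - 1))) with hR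
  have hinfluence : ∀ i : Fin n, 𝔼 ω : Fin n → Fin m × Fin m, 𝔼 y, influence d i ω y ^ 2 ≤ R := by
    intro i
    rw [Finset.expect_comm, ← Fintype.expect_const (ι := Fin m × Fin m) R]
    exact Finset.expect_le_expect fun y _ => expect_influence_sq_le hd i y
  have hcoord : ∀ (i : Fin n) (ω : Fin n → Fin m × Fin m) (y : Fin m × Fin m),
      (incrementSum ψ (realUrnCount d) ω -
        incrementSum ψ (realUrnCount d) (Function.update ω i y)) ^ 2 ≤
      32 * influence d i ω y ^ 2 + 32 * influence d i (Function.update ω i y) (ω i) ^ 2 := by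
    intro i ω y
    have hle := pow_le_pow_left₀ (abs_nonneg _) (abs_incrementSum_sub_update_le hψ d i ω y) 2
    rw [sq_abs] at hle
    linarith [add_sq_le (a := 4 * influence d i ω y)
      (b := 4 * influence d i (Function.update ω i y) (ω i))]
  have hsum : ∀ i : Fin n, 𝔼 ω : Fin n → Fin m × Fin m, 𝔼 y, (incrementSum ψ (realUrnCount d) ω -
      incrementSum ψ (realUrnCount d) (Function.update ω i y)) ^ 2 ≤ 64 * R := by
    intro i
    refine (Finset.expect_le_expect fun ω _ => Finset.expect_le_expect fun y _ =>
      hcoord i ω y).trans ?_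
    simp only [Finset.expect_add_distrib, ← Finset.mul_expect]
    rw [expect_update_swap i fun ω y => influence d i ω y ^ 2]
    linarith [hinfluence i]
  have hpow : (m : ℝ) * ((n : ℝ) / m) ^ d = n * ((n : ℝ) / m) ^ (d - 1) := by
    rw [← mul_pow_sub_one (by omega : d ≠ 0) ((n : ℝ) / m), ← mul_assoc, mul_div_cancel₀ _ hm]
  calc _ ≤ (∑ _i : Fin n, 64 * R) / 2 := (uniformVariance_le_sum_expect_update_sq _).trans
        (div_le_div_of_nonneg_right (Finset.sum_le_sum fun i _ => hsum i) two_pos.le)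
    _ = _ := by
        rw [Finset.sum_const, Finset.card_univ, Fintype.card_fin, nsmul_eq_mul, hR, hpow]
        ring

end Influence

/-! ### Lower bound for the variance -/

section LowerBound

variable {n m : ℕ}

theorem ballCount_update_old {X : Fin n → Fin m} {j : Fin n} {q : Fin m} (hq : q ≠ X j) :
    ballCount (Function.update X j q) (X j) = ballCount X (X j) - 1 := by
  have hfilter : (Finset.univ.filter fun l => Function.update X j q l = X j) =
      (Finset.univ.filter fun l => X l = X j).erase j := by
    ext l
    by_cases hl : l = j
    · subst hl
      simp [hq]
    · simp [hl]
  rw [ballCount, ballCount, hfilter, Finset.card_erase_of_mem (by simp)]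

theorem ballCount_update_new {X : Fin n → Fin m} {j : Fin n} {q : Fin m} (hq : q ≠ X j) :
    ballCount (Function.update X j q) q = ballCount X q + 1 := by
  have hfilter : (Finset.univ.filter fun l => Function.update X j q l = q) =
      insert j (Finset.univ.filter fun l => X l = q) := by
    ext l
    by_cases hl : l = j
    · subst hl
      simp
    · simp [hl]
  rw [ballCount, ballCount, hfilter, Finset.card_insert_of_notMem (by simp [hq.symm])]

/-- The allocations for which the balls of `S`, and no others, are in urn `p`, and urn `q` is
empty. -/
def exactAllocations (p q : Fin m) (S : Finset (Fin n)) : Finset (Fin n → Fin m) :=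
  Fintype.piFinset fun l => if l ∈ S then {p} else {p, q}ᶜ

/-- Move ball `j` between the urns `p` and `q`, if it lies in one of them. -/
def toggle (p q : Fin m) (j : Fin n) (X : Fin n → Fin m) : Fin n → Fin m :=
  Function.update X j (Equiv.swap p q (X j))

/-- The part of the indicator of `exactAllocations p q S` which is odd under `toggle p q j`. -/
noncomputable def toggleTest (p q : Fin m) (S : Finset (Fin n)) (j : Fin n)
    (X : Fin n → Fin m) : ℝ :=
  ((if X ∈ exactAllocations p q S then 1 else 0) -
    if toggle p q j X ∈ exactAllocations p q S then 1 else 0) / 2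

theorem mem_exactAllocations {p q : Fin m} {S : Finset (Fin n)} {X : Fin n → Fin m} :
    X ∈ exactAllocations p q S ↔ ∀ l, if l ∈ S then X l = p else X l ≠ p ∧ X l ≠ q := by
  simp only [exactAllocations, Fintype.mem_piFinset]
  refine forall_congr' fun l => ?_
  split_ifs <;> simp

theorem expect_ite_mem_exactAllocations {p q : Fin m} (hpq : p ≠ q) (S : Finset (Fin n)) :
    𝔼 X, (if X ∈ exactAllocations p q S then (1 : ℝ) else 0) =
      ((m : ℝ) - 2) ^ (n - S.card) / (m : ℝ) ^ n := by
  have hm : 2 ≤ m := by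
    simpa only [Finset.card_pair hpq, Fintype.card_fin] using
      Finset.card_le_univ ({p, q} : Finset (Fin m))
  have hcard : (exactAllocations p q S).card = (m - 2) ^ (n - S.card) := by
    simp only [exactAllocations, Fintype.card_piFinset, apply_ite Finset.card,
      Finset.card_singleton, Finset.card_compl, Finset.card_pair hpq, Fintype.card_fin]
    rw [Finset.prod_ite, Finset.prod_const_one, one_mul, Finset.prod_const,
      ← Finset.compl_filter, Finset.card_compl, Finset.filter_univ_mem, Fintype.card_fin]
  rw [Fintype.expect_eq_sum_div_card, Finset.sum_boole, Finset.filter_univ_mem, hcard]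
  simp [Nat.cast_sub hm]

theorem toggle_involutive (p q : Fin m) (j : Fin n) : Function.Involutive (toggle p q j) := by
  intro X
  simp [toggle]

theorem expect_toggle (p q : Fin m) (j : Fin n) (g : (Fin n → Fin m) → ℝ) :
    𝔼 X, g (toggle p q j X) = 𝔼 X, g X :=
  Fintype.expect_equiv (toggle_involutive p q j).toPerm _ _ fun _ => rfl

theorem toggle_eq_or_eq_iff (p q : Fin m) (j : Fin n) (X : Fin n → Fin m) (l : Fin n) :
    toggle p q j X l = p ∨ toggle p q j X l = q ↔ X l = p ∨ X l = q := by
  by_cases hl : l = j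
  · subst hl
    simp [toggle, Equiv.swap_apply_eq_iff, or_comm]
  · simp [toggle, hl]

theorem toggle_eq_iff_of_ne {p q u : Fin m} (hp : u ≠ p) (hq : u ≠ q) (j : Fin n)
    (X : Fin n → Fin m) (l : Fin n) : toggle p q j X l = u ↔ X l = u := by
  by_cases hl : l = j
  · subst hl
    simp [toggle, Equiv.swap_apply_eq_iff, Equiv.swap_apply_of_ne_of_ne hp hq]
  · simp [toggle, hl]

theorem toggle_comm {p q p' q' : Fin m} (hpq : Disjoint ({p, q} : Finset (Fin m)) {p', q'})
    (j j' : Fin n) (X : Fin n → Fin m) :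
    toggle p q j (toggle p' q' j' X) = toggle p' q' j' (toggle p q j X) := by
  have hne : (p ≠ p' ∧ q ≠ p') ∧ p ≠ q' ∧ q ≠ q' := by
    simpa [not_or, eq_comm] using hpq
  by_cases hj : j = j'
  · subst hj
    simp only [toggle, Function.update_self, Function.update_idem, Equiv.swap_apply_def]
    congr 1
    grind
  · simp only [toggle, Function.update_of_ne hj, Function.update_of_ne (Ne.symm hj),
      Function.update_comm hj]

theorem toggleTest_toggle (p q : Fin m) (S : Finset (Fin n)) (j : Fin n) (X : Fin n → Fin m) :
    toggleTest p q S j (toggle p q j X) = -toggleTest p q S j X := by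
  rw [toggleTest, toggleTest, toggle_involutive]
  ring

theorem toggleTest_toggle_of_disjoint {p q p' q' : Fin m}
    (hpq : Disjoint ({p, q} : Finset (Fin m)) {p', q'}) (S : Finset (Fin n)) (j j' : Fin n)
    (X : Fin n → Fin m) : toggleTest p q S j (toggle p' q' j' X) = toggleTest p q S j X := by
  have hne : (p ≠ p' ∧ q ≠ p') ∧ p ≠ q' ∧ q ≠ q' := by
    simpa [not_or, eq_comm] using hpq
  simp only [toggleTest, toggle_comm hpq, mem_exactAllocations, ne_eq,
    toggle_eq_iff_of_ne hne.1.1 hne.2.1, toggle_eq_iff_of_ne hne.1.2 hne.2.2]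

theorem eq_filter_of_toggleTest_ne_zero {p q : Fin m} {S : Finset (Fin n)} {j : Fin n}
    {X : Fin n → Fin m} (h : toggleTest p q S j X ≠ 0) :
    S = Finset.univ.filter fun l => X l = p ∨ X l = q := by
  have hfilter : ∀ {X}, X ∈ exactAllocations p q S →
      S = Finset.univ.filter fun l => X l = p ∨ X l = q := by
    intro X hX
    ext l
    have hl := mem_exactAllocations.1 hX l
    split_ifs at hl with hlS <;> simp [hlS, hl]
  by_cases hX : X ∈ exactAllocations p q S
  · exact hfilter hX
  · have htoggle : toggle p q j X ∈ exactAllocations p q S := by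
      by_contra htoggle
      simp [toggleTest, hX, htoggle] at h
    simpa only [toggle_eq_or_eq_iff] using hfilter htoggle

theorem realUrnCount_sub_toggle_eq_one {d : ℕ} (hd : 2 ≤ d) {p q : Fin m} (hpq : p ≠ q)
    {S : Finset (Fin n)} (hS : S.card = d) {j : Fin n} (hj : j ∈ S) {X : Fin n → Fin m}
    (hX : X ∈ exactAllocations p q S) :
    realUrnCount d X - realUrnCount d (toggle p q j X) = 1 := by
  rw [mem_exactAllocations] at hX
  have hXj : X j = p := by simpa [hj] using hX j
  have hp : ballCount X p = d := by
    rw [← hS, ballCount]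
    congr 1
    ext l
    have hl := hX l
    split_ifs at hl with hlS <;> simp [hlS, hl]
  have hq : ballCount X q = 0 := by
    refine Finset.card_eq_zero.2 (Finset.filter_eq_empty_iff.2 fun l _ => ?_)
    have hl := hX l
    split_ifs at hl with hlS
    · rwa [hl]
    · exact hl.2
  have hp' := ballCount_update_old (X := X) (j := j) (hXj ▸ hpq.symm)
  have hq' := ballCount_update_new (X := X) (j := j) (hXj ▸ hpq.symm)
  rw [hXj, hp] at hp'
  rw [hq] at hq'
  rw [toggle, hXj, Equiv.swap_apply_left, realUrnCount_sub_update, hXj, Finset.sum_pair hpq, hp,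
    hq, hp', hq', if_pos rfl, if_neg (by omega), if_neg (by omega), if_neg (by omega)]
  norm_num

theorem expect_realUrnCount_mul_toggleTest {d : ℕ} (hd : 2 ≤ d) {p q : Fin m} (hpq : p ≠ q)
    {S : Finset (Fin n)} (hS : S.card = d) {j : Fin n} (hj : j ∈ S) :
    𝔼 X, realUrnCount d X * toggleTest p q S j X =
      (((m : ℝ) - 2) ^ (n - d) / (m : ℝ) ^ n) / 2 := by
  have htoggle := expect_toggle p q j fun X =>
    realUrnCount d (toggle p q j X) * if X ∈ exactAllocations p q S then 1 else 0
  simp only [toggle_involutive p q j _] at htoggle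
  rw [← hS, ← expect_ite_mem_exactAllocations hpq, hS]
  simp only [toggleTest, ← mul_div_assoc, ← Finset.expect_div, mul_sub,
    Finset.expect_sub_distrib, htoggle]
  rw [← Finset.expect_sub_distrib]
  congr 1
  refine Finset.expect_congr rfl fun X _ => ?_
  split_ifs with hX
  · rw [← sub_mul, realUrnCount_sub_toggle_eq_one hd hpq hS hj hX, one_mul]
  · simp

theorem expect_toggleTest_sq_le {p q : Fin m} (hpq : p ≠ q) (S : Finset (Fin n)) (j : Fin n) :
    𝔼 X, toggleTest p q S j X ^ 2 ≤ (((m : ℝ) - 2) ^ (n - S.card) / (m : ℝ) ^ n) / 2 := by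
  have htoggle := expect_toggle p q j fun X =>
    if X ∈ exactAllocations p q S then (1 : ℝ) else 0
  calc 𝔼 X, toggleTest p q S j X ^ 2
      ≤ 𝔼 X, ((if X ∈ exactAllocations p q S then 1 else 0) +
          if toggle p q j X ∈ exactAllocations p q S then 1 else 0) / 4 := by
        refine Finset.expect_le_expect fun X _ => ?_
        unfold toggleTest
        split_ifs <;> norm_num
    _ = _ := by
        rw [← Finset.expect_div, Finset.expect_add_distrib, htoggle,
          expect_ite_mem_exactAllocations hpq]
        ring

theorem expect_toggleTest (p q : Fin m) (S : Finset (Fin n)) (j : Fin n) :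
    𝔼 X, toggleTest p q S j X = 0 := by
  have htoggle := expect_toggle p q j (toggleTest p q S j)
  simp only [toggleTest_toggle, Finset.expect_neg_distrib] at htoggle
  linarith

theorem expect_toggleTest_mul_toggleTest_of_ne {p q : Fin m} {S S' : Finset (Fin n)} (hS : S ≠ S')
    (j j' : Fin n) : 𝔼 X, toggleTest p q S j X * toggleTest p q S' j' X = 0 := by
  refine Finset.expect_eq_zero fun X _ => ?_
  by_contra hprod
  exact hS ((eq_filter_of_toggleTest_ne_zero (left_ne_zero_of_mul hprod)).trans
    (eq_filter_of_toggleTest_ne_zero (right_ne_zero_of_mul hprod)).symm)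

theorem expect_toggleTest_mul_toggleTest_of_disjoint {p q p' q' : Fin m}
    (hpq : Disjoint ({p', q'} : Finset (Fin m)) {p, q}) (S S' : Finset (Fin n)) (j j' : Fin n) :
    𝔼 X, toggleTest p q S j X * toggleTest p' q' S' j' X = 0 := by
  have htoggle := expect_toggle p q j fun X => toggleTest p q S j X * toggleTest p' q' S' j' X
  simp only [toggleTest_toggle, toggleTest_toggle_of_disjoint hpq, neg_mul,
    Finset.expect_neg_distrib] at htoggle
  linarith

theorem card_mul_choose_mul_le_uniformVariance {κ : Type*} [Fintype κ] (f : κ ⊕ κ ↪ Fin m)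
    {d : ℕ} (hd : 2 ≤ d) :
    (Fintype.card κ * n.choose d) * ((((m : ℝ) - 2) ^ (n - d) / (m : ℝ) ^ n) / 2) ≤
      uniformVariance fun X : Fin n → Fin m => realUrnCount d X := by
  have hne : ∀ k, f (.inl k) ≠ f (.inr k) := fun k => f.injective.ne Sum.inl_ne_inr
  have hdisjoint : ∀ {k k'}, k ≠ k' →
      Disjoint ({f (.inl k'), f (.inr k')} : Finset (Fin m)) {f (.inl k), f (.inr k)} := by
    intro k k' hk
    simp [hk]
  choose j hj using fun S : {S : Finset (Fin n) // S.card = d} =>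
    Finset.card_pos.1 (by rw [S.2]; omega : 0 < (S : Finset (Fin n)).card)
  let h : κ × {S : Finset (Fin n) // S.card = d} → (Fin n → Fin m) → ℝ := fun x =>
    toggleTest (f (.inl x.1)) (f (.inr x.1)) x.2 (j x.2)
  have horth : ∀ x y, x ≠ y → 𝔼 X, h x X * h y X = 0 := by
    rintro ⟨k, S⟩ ⟨k', S'⟩ hxy
    by_cases hk : k = k'
    · subst hk
      exact expect_toggleTest_mul_toggleTest_of_ne
        (fun hS => hxy (Prod.ext rfl (Subtype.ext hS))) _ _
    · exact expect_toggleTest_mul_toggleTest_of_disjoint (hdisjoint hk) _ _ _ _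
  refine le_trans ?_ (sum_expect_mul_sub_sq_le_uniformVariance _
    (fun x => expect_toggleTest _ _ _ _ : ∀ x, 𝔼 X, h x X = 0) horth)
  have hcard : ((Fintype.card κ * n.choose d : ℕ) : ℝ) =
      (Finset.univ : Finset (κ × {S : Finset (Fin n) // S.card = d})).card := by
    rw [Finset.card_univ, Fintype.card_prod, Fintype.card_finset_len, Fintype.card_fin]
  rw [← Nat.cast_mul, hcard, ← nsmul_eq_mul]
  refine Finset.card_nsmul_le_sum _ _ _ fun x _ => ?_
  have hmul := expect_realUrnCount_mul_toggleTest hd (hne x.1) x.2.2 (hj x.2)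
  have hsq := expect_toggleTest_sq_le (hne x.1) x.2.1 (j x.2)
  rw [x.2.2] at hsq
  linarith

theorem exp_neg_three_mul_le_one_sub {x : ℝ} (h0 : 0 ≤ x) (h1 : x ≤ 2 / 3) :
    Real.exp (-(3 * x)) ≤ 1 - x := by
  rw [Real.exp_neg]
  refine (inv_anti₀ (by positivity) (Real.add_one_le_exp (3 * x))).trans ?_
  rw [inv_le_iff_one_le_mul₀ (by positivity)]
  nlinarith

theorem exp_neg_six_mul_le_one_sub_two_div_pow {k : ℕ} (hm : 3 ≤ m) {b : ℝ}
    (hb : (k : ℝ) / m ≤ b) : Real.exp (-(6 * b)) ≤ (1 - 2 / (m : ℝ)) ^ k := by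
  have hm' : (3 : ℝ) ≤ m := by exact_mod_cast hm
  calc Real.exp (-(6 * b)) ≤ Real.exp (-(6 * (k / m))) := by gcongr
    _ = Real.exp (-(3 * (2 / (m : ℝ)))) ^ k := by
        rw [← Real.exp_nat_mul]
        ring_nf
    _ ≤ (1 - 2 / (m : ℝ)) ^ k := by
        gcongr
        exact exp_neg_three_mul_le_one_sub (by positivity) (by gcongr)

theorem div_pow_div_factorial_le_choose {d : ℕ} (hn : d ≤ n) :
    ((n : ℝ) / d) ^ d / d.factorial ≤ n.choose d := by
  rcases Nat.eq_zero_or_pos d with rfl | hd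
  · simp
  have hd' : (1 : ℝ) ≤ d := by exact_mod_cast hd
  have hn' : (d : ℝ) ≤ n := by exact_mod_cast hn
  refine le_trans ?_ (Nat.pow_le_choose d n)
  gcongr
  rw [div_le_iff₀ (by positivity)]
  push_cast [Nat.cast_sub (show d ≤ n + 1 by omega)]
  nlinarith

theorem le_uniformVariance_realUrnCount {d : ℕ} (hd : 2 ≤ d) (hn : d ≤ n) (hm : 3 ≤ m) {b : ℝ}
    (hb : (n : ℝ) / m ≤ b) :
    Real.exp (-(6 * b)) / (6 * d ^ d * d.factorial) * (m * ((n : ℝ) / m) ^ d) ≤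
      uniformVariance fun X : Fin n → Fin m => realUrnCount d X := by
  have hm' : (0 : ℝ) < m := by exact_mod_cast (show 0 < m by omega)
  have : 0 < d := by omega
  obtain ⟨f⟩ : Nonempty (Fin (m / 2) ⊕ Fin (m / 2) ↪ Fin m) :=
    Function.Embedding.nonempty_of_card_le <| by
      simp only [Fintype.card_sum, Fintype.card_fin]
      omega
  have hpairs : (m : ℝ) / 3 ≤ ((m / 2 : ℕ) : ℝ) := by
    rw [div_le_iff₀ three_pos]
    exact_mod_cast (show m ≤ m / 2 * 3 by omega)
  have hprob : Real.exp (-(6 * b)) / (m : ℝ) ^ d ≤ ((m : ℝ) - 2) ^ (n - d) / (m : ℝ) ^ n := by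
    have hratio : ((n - d : ℕ) : ℝ) / m ≤ b := by
      refine le_trans ?_ hb
      gcongr
      exact Nat.sub_le n d
    calc _ ≤ (1 - 2 / (m : ℝ)) ^ (n - d) / (m : ℝ) ^ d := by
          gcongr
          exact exp_neg_six_mul_le_one_sub_two_div_pow hm hratio
      _ = _ := by
          rw [one_sub_div hm'.ne', div_pow, div_div, ← pow_add, Nat.sub_add_cancel hn]
  calc _ = ((m : ℝ) / 3 * (((n : ℝ) / d) ^ d / d.factorial)) *
        ((Real.exp (-(6 * b)) / (m : ℝ) ^ d) / 2) := by
        rw [div_pow, div_pow]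
        field_simp
        ring
    _ ≤ (Fintype.card (Fin (m / 2)) * n.choose d) *
        ((((m : ℝ) - 2) ^ (n - d) / (m : ℝ) ^ n) / 2) := by
        rw [Fintype.card_fin]
        gcongr
        exact div_pow_div_factorial_le_choose hn
    _ ≤ _ := card_mul_choose_mul_le_uniformVariance f hd

end LowerBound

/-! ### The occupancy law -/

section OccupancyLaw

variable {n m : ℕ}

theorem integral_occ (f : (Fin n → Fin m) → ℝ) : ∫ X, f X ∂(occ n m) = 𝔼 X, f X := by
  rw [occ, integral_smul_measure, integral_count, Fintype.expect_eq_sum_div_card, smul_eq_mul,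
    ENNReal.toReal_inv, ENNReal.toReal_natCast, inv_mul_eq_div]

theorem occ_toReal_eq_expect (P : (Fin n → Fin m) → Prop) [DecidablePred P] :
    ((occ n m) {X | P X}).toReal = 𝔼 X, if P X then 1 else 0 := by
  have hint := integral_indicator_one (μ := occ n m) (s := {X | P X}) (Set.toFinite _).measurableSet
  rw [integral_occ] at hint
  rw [← Measure.real, ← hint]
  exact Finset.expect_congr rfl fun X _ => Set.indicator_apply _ _ _

theorem occMean_eq_expect (d : ℕ) : occMean d n m = 𝔼 X : Fin n → Fin m, realUrnCount d X :=
  integral_occ _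

theorem occVar_eq_uniformVariance (d : ℕ) :
    occVar d n m = uniformVariance fun X : Fin n → Fin m => realUrnCount d X := by
  rw [occVar, variance_eq_integral (measurable_of_finite _).aemeasurable, integral_occ,
    integral_occ, uniformVariance]

theorem occKolm_eq_expect_sub (d : ℕ) (z : ℝ) :
    occKolm d n m z = 𝔼 X : Fin n → Fin m,
      (if (realUrnCount d X - 𝔼 X' : Fin n → Fin m, realUrnCount d X') /
        √(uniformVariance fun X' : Fin n → Fin m => realUrnCount d X') ≤ z then 1 else 0) -
          stdGaussCDF z := by
  rw [occKolm, occ_toReal_eq_expect, occMean_eq_expect, occVar_eq_uniformVariance]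

theorem urnCount_ite_eq_zero_iff {d : ℕ} (hd : d ≠ 0) {p q : Fin m} (hpq : p ≠ q)
    (S : Finset (Fin n)) :
    urnCount d (fun l => if l ∈ S then p else q) = 0 ↔ S.card ≠ d ∧ n - S.card ≠ d := by
  have hp : ballCount (fun l => if l ∈ S then p else q) p = S.card := by
    simp [ballCount, hpq.symm]
  have hq : ballCount (fun l => if l ∈ S then p else q) q = n - S.card := by
    simp only [ballCount, ite_eq_iff, hpq, and_false, and_true, false_or]
    rw [← Finset.compl_filter, Finset.card_compl, Finset.filter_univ_mem, Fintype.card_fin]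
  have hne : ∀ u, u ≠ p → u ≠ q → ballCount (fun l => if l ∈ S then p else q) u ≠ d := by
    intro u hup huq
    simp [ballCount, ite_eq_iff, hup.symm, huq.symm, hd.symm]
  rw [urnCount, Finset.card_eq_zero, Finset.filter_eq_empty_iff]
  refine ⟨fun h => ⟨hp ▸ h (Finset.mem_univ p), hq ▸ h (Finset.mem_univ q)⟩, fun h u _ => ?_⟩
  by_cases hup : u = p
  · rw [hup, hp]
    exact h.1
  by_cases huq : u = q
  · rw [huq, hq]
    exact h.2
  exact hne u hup huq

theorem occVar_pos {d : ℕ} (hd : 2 ≤ d) (hn : d ≤ n) (hm : 2 ≤ m) : 0 < occVar d n m := by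
  have hpq : (⟨0, by omega⟩ : Fin m) ≠ ⟨1, by omega⟩ := by simp
  have hexists : ∀ k ≤ n, ∃ S : Finset (Fin n), S.card = k := fun k hk =>
    (Finset.exists_subset_card_eq (s := Finset.univ) (by rwa [Finset.card_fin])).imp
      fun _ => And.right
  obtain ⟨S, hS⟩ := hexists d hn
  obtain ⟨T, hT⟩ := hexists (if n = d then 1 else 0) (by split_ifs <;> omega)
  have hcountS := (urnCount_ite_eq_zero_iff (by omega : d ≠ 0) hpq S).not.2 (by omega)
  have hcountT := (urnCount_ite_eq_zero_iff (by omega : d ≠ 0) hpq T).2 (by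
    split_ifs at hT <;> omega)
  rw [occVar_eq_uniformVariance]
  exact uniformVariance_pos (Nat.cast_injective.ne (hcountS ∘ fun h => h.trans hcountT))

variable [NeZero m]

instance isProbabilityMeasure_occ : IsProbabilityMeasure (occ n m) := by
  refine ⟨?_⟩
  rw [occ, Measure.smul_apply, Measure.count_univ, smul_eq_mul, ENat.card_eq_coe_fintype_card]
  exact ENNReal.inv_mul_cancel (Nat.cast_ne_zero.2 Fintype.card_ne_zero) (ENNReal.natCast_ne_top _)

theorem abs_occKolm_le_one (d : ℕ) (z : ℝ) : |occKolm d n m z| ≤ 1 :=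
  abs_sub_le_of_nonneg_of_le measureReal_nonneg measureReal_le_one (stdGaussCDF_nonneg z)
    (stdGaussCDF_le_one z)

theorem occVar_le (d : ℕ) : occVar d n m ≤ ((m : ℝ) / 2) ^ 2 := by
  have hmem : ∀ X : Fin n → Fin m, (urnCount d X : ℝ) ∈ Set.Icc 0 (m : ℝ) := fun X =>
    ⟨Nat.cast_nonneg _, Nat.cast_le.2 ((Finset.card_filter_le _ _).trans_eq (Finset.card_fin m))⟩
  simpa only [sub_zero, occVar] using variance_le_sq_of_bounded (μ := occ n m) (ae_of_all _ hmem)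
    (measurable_of_finite _).aemeasurable

theorem abs_occKolm_le {d : ℕ} (hd : 2 ≤ d) {b c : ℝ} (hb : (n : ℝ) / m ≤ b) (hc : 0 < c)
    (hpos : 0 < occVar d n m) (hlow : c * (m * ((n : ℝ) / m) ^ d) ≤ occVar d n m) (z : ℝ) :
    |occKolm d n m z| ≤ 3 * √(64 * (d + 1 + 8 * b) * (2 + 8 * b) / c) / √(occVar d n m) := by
  have hb0 : 0 ≤ b := le_trans (by positivity) hb
  set K := √(64 * (d + 1 + 8 * b) * (2 + 8 * b) / c) with hK
  have hincrement : ∀ ψ : ℝ → ℝ → ℝ, (∀ x y, |ψ x y| ≤ |x| * |y|) →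
      √(uniformVariance fun ω : Fin n → Fin m × Fin m => incrementSum ψ (realUrnCount d) ω) ≤
        K * √(occVar d n m) := by
    intro ψ hψ
    rw [hK, ← Real.sqrt_mul (by positivity)]
    refine Real.sqrt_le_sqrt ((uniformVariance_incrementSum_le hd hψ).trans ?_)
    calc _ ≤ 64 * (d + 1 + 8 * b) * (2 + 8 * b) * (occVar d n m / c) := by
          gcongr
          rwa [le_div_iff₀' hc]
      _ = _ := by ring
  rw [occKolm_eq_expect_sub]
  have hvar : 0 < uniformVariance fun X : Fin n → Fin m => realUrnCount d X := by
    rwa [← occVar_eq_uniformVariance]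
  refine (abs_expect_standardized_indicator_sub_stdGaussCDF_le hvar z).trans ?_
  rw [← occVar_eq_uniformVariance]
  have hmul := hincrement (· * ·) fun x y => (abs_mul x y).le
  have hmul_abs := hincrement (|·| * ·) fun x y => by rw [abs_mul, abs_abs]
  calc _ ≤ 3 * K * √(occVar d n m) / occVar d n m := by
        gcongr
        linarith
    _ = _ := by rw [mul_div_assoc, Real.sqrt_div_self', mul_one_div]

end OccupancyLaw

/-- Corollary 1.1: in the regime `n/m ≤ b` the Berry–Esseen bound has the optimal
rate `1/σ_{n,m}`. -/
theorem occupancy_berry_esseen_bounded_ratio (d : ℕ) (hd : 2 ≤ d) (b : ℝ) (hb : 0 < b) :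
    ∃ C : ℝ, 0 < C ∧ ∀ n m : ℕ, d ≤ n → 2 ≤ m → (n : ℝ) / m ≤ b → ∀ z : ℝ,
      |occKolm d n m z| ≤ C / Real.sqrt (occVar d n m) := by
  set c : ℝ := Real.exp (-(6 * b)) / (6 * d ^ d * d.factorial)
  have hc0 : 0 < c := by
    have : 0 < d := by omega
    positivity
  set K : ℝ := √(64 * (d + 1 + 8 * b) * (2 + 8 * b) / c)
  refine ⟨3 * K + 1, by positivity, fun n m hn hm hnm z => ?_⟩
  have : NeZero m := ⟨by omega⟩
  have hpos : 0 < occVar d n m := occVar_pos hd hn hm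
  rcases hm.eq_or_lt with rfl | hm
  · have hsqrt : √(occVar d n 2) ≤ 1 := Real.sqrt_le_one.2 ((occVar_le d).trans (by norm_num))
    calc |occKolm d n 2 z| ≤ 1 := abs_occKolm_le_one d z
      _ ≤ (3 * K + 1) / √(occVar d n 2) := by
        rw [one_le_div (Real.sqrt_pos.2 hpos)]
        exact hsqrt.trans (le_add_of_nonneg_left (by positivity))
  · have hlow : c * (m * ((n : ℝ) / m) ^ d) ≤ occVar d n m :=
      (le_uniformVariance_realUrnCount hd hn hm hnm).trans_eq (occVar_eq_uniformVariance d).symm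
    calc |occKolm d n m z| ≤ 3 * K / √(occVar d n m) := abs_occKolm_le hd hnm hc0 hpos hlow z
      _ ≤ (3 * K + 1) / √(occVar d n m) := by
        gcongr
        exact le_add_of_nonneg_right zero_le_one
end

section
/- Let Y = Σ_{α ∈ I} X_α be a finite sum of exchangeable Bernoulli random variables {X_α, α ∈ I} with P(X_α = 1) > 0. Then for every α ∈ I and every bounded function f, E[Y f(Y)] = E[Y] · E[f(Y) | X_α = 1]. Consequently, if Y^α is any random variable whose distribution is the conditional distribution of Y given X_α = 1, then Y^α has the Y-size bias distribution; moreover, if I is a random index uniformly distributed over the index set and independent of all other variables, the mixture Y^I also has the Y-size bias distribution. -/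
open MeasureTheory ProbabilityTheory

/-!
The measure `y μ(dy)`, where `μ` is the law of `Y = ∑ γ, X γ`, is the sum over `γ` of the laws of
`Y` under `X γ dP`. By exchangeability these laws coincide, and since `X α` is the indicator of
`{X α = 1}`, each of them is a multiple of the law of `Y` given `X α = 1`. So that conditional law
is the probability measure proportional to `y μ(dy)`, which is the size bias distribution.
-/

open scoped ENNReal

section SizeBias

/-- `ν` is the size bias distribution of `μ`, a law on `[0, ∞)` with finite nonzero mean: the
density of `ν` with respect to `μ` is `y` divided by the mean of `μ`. The mean is taken as a
Lebesgue integral and multiplied out, so that neither integrability nor division is involved. -/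
def IsSizeBias (μ ν : Measure ℝ) : Prop :=
  μ.withDensity ENNReal.ofReal = (∫⁻ y, ENNReal.ofReal y ∂μ) • ν

variable {μ ν : Measure ℝ} {E : Type*} [NormedAddCommGroup E] [NormedSpace ℝ E]

theorem IsSizeBias.of_withDensity_eq_smul [IsProbabilityMeasure ν] {c : ℝ≥0∞}
    (h : μ.withDensity ENNReal.ofReal = c • ν) : IsSizeBias μ ν := by
  have hc : ∫⁻ y, ENNReal.ofReal y ∂μ = c := by
    simpa using congrArg (fun ρ : Measure ℝ => ρ Set.univ) h
  rw [IsSizeBias, hc, h]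

theorem IsSizeBias.integral_smul (h : IsSizeBias μ ν) (hμ : ∀ᵐ y ∂μ, 0 ≤ y) (f : ℝ → E) :
    ∫ y, y • f y ∂μ = (∫ y, y ∂μ) • ∫ y, f y ∂ν := by
  calc ∫ y, y • f y ∂μ = ∫ y, (ENNReal.ofReal y).toReal • f y ∂μ :=
        integral_congr_ae (hμ.mono fun y hy => by simp only [ENNReal.toReal_ofReal hy])
    _ = ∫ y, f y ∂(μ.withDensity ENNReal.ofReal) :=
        (integral_withDensity_eq_integral_toReal_smul ENNReal.measurable_ofReal
          (.of_forall fun _ => ENNReal.ofReal_lt_top) f).symm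
    _ = (∫⁻ y, ENNReal.ofReal y ∂μ).toReal • ∫ y, f y ∂ν := by rw [h, integral_smul_measure]
    _ = (∫ y, y ∂μ) • ∫ y, f y ∂ν := by
        rw [integral_eq_lintegral_of_nonneg_ae hμ aestronglyMeasurable_id]

theorem IsSizeBias.integral_smul_comp {Ω Ω' : Type*} [MeasurableSpace Ω] [MeasurableSpace Ω']
    {P : Measure Ω} {P' : Measure Ω'} {Y : Ω → ℝ} {Ys : Ω' → ℝ}
    (h : IsSizeBias (P.map Y) (P'.map Ys)) (hY : AEMeasurable Y P) (hYs : AEMeasurable Ys P')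
    (hY_nonneg : ∀ᵐ ω ∂P, 0 ≤ Y ω) {f : ℝ → E} (hf : StronglyMeasurable f) :
    ∫ ω, Y ω • f (Y ω) ∂P = (∫ ω, Y ω ∂P) • ∫ ω, f (Ys ω) ∂P' := by
  have hlaw : ∀ᵐ y ∂P.map Y, 0 ≤ y := (ae_map_iff hY measurableSet_Ici).2 hY_nonneg
  have hsmul : StronglyMeasurable fun y : ℝ => y • f y := stronglyMeasurable_id.smul hf
  have hmean : ∫ y, y ∂P.map Y = ∫ ω, Y ω ∂P := integral_map hY aestronglyMeasurable_id
  calc ∫ ω, Y ω • f (Y ω) ∂P = ∫ y, y • f y ∂P.map Y :=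
        (integral_map hY hsmul.aestronglyMeasurable).symm
    _ = (∫ y, y ∂P.map Y) • ∫ y, f y ∂P'.map Ys := h.integral_smul hlaw f
    _ = (∫ ω, Y ω ∂P) • ∫ ω, f (Ys ω) ∂P' := by
        rw [hmean, integral_map hYs hf.aestronglyMeasurable]

end SizeBias

section Density

variable {Ω F : Type*} [MeasurableSpace Ω] [MeasurableSpace F] {P : Measure Ω}

theorem map_withDensity_comp {V : Ω → F} (hV : Measurable V) {h : F → ℝ≥0∞} (hh : Measurable h) :
    (P.withDensity fun ω => h (V ω)).map V = (P.map V).withDensity h := by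
  ext s hs
  rw [Measure.map_apply hV hs, withDensity_apply _ (hV hs), withDensity_apply _ hs,
    setLIntegral_map hs hh hV]

theorem withDensity_sum_fintype {ι : Type*} [Fintype ι] {f : ι → Ω → ℝ≥0∞}
    (hf : ∀ α, Measurable (f α)) :
    P.withDensity (fun ω => ∑ α, f α ω) = ∑ α, P.withDensity (f α) := by
  rw [← Measure.sum_fintype, ← withDensity_tsum hf, tsum_fintype]
  congr 1 with ω
  rw [Finset.sum_apply]

theorem withDensity_ofReal_eq_restrict {B : Ω → ℝ} (hB : Measurable B)
    (hBer : ∀ ω, B ω = 0 ∨ B ω = 1) :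
    P.withDensity (fun ω => ENNReal.ofReal (B ω)) = P.restrict {ω | B ω = 1} := by
  have hs : MeasurableSet {ω | B ω = 1} := hB (measurableSet_singleton 1)
  rw [← withDensity_indicator_one hs]
  congr 1 with ω
  rcases hBer ω with hω | hω <;> simp [hω]

theorem restrict_eq_smul_cond {s : Set Ω} (hs : P s ≠ 0) (hs_fin : P s ≠ ∞) :
    P.restrict s = P s • P[|s] := by
  rw [ProbabilityTheory.cond, smul_smul, ENNReal.mul_inv_cancel hs hs_fin, one_smul]

end Density

section Exchangeable

variable {Ω ι E F : Type*} [MeasurableSpace Ω] [MeasurableSpace E] [MeasurableSpace F]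
  {P : Measure Ω}

/-- The family `X` is exchangeable under `P`: its joint law is invariant under permutations of the
index set. -/
def Exchangeable (X : ι → Ω → E) (P : Measure Ω) : Prop :=
  ∀ σ : Equiv.Perm ι, P.map (fun ω α => X (σ α) ω) = P.map (fun ω α => X α ω)

theorem Exchangeable.map_withDensity_eq {X : ι → Ω → E} (hX : Exchangeable X P)
    (hmeas : ∀ α, Measurable (X α)) {g : E → ℝ≥0∞} (hg : Measurable g) {S : (ι → E) → F}
    (hS : Measurable S) (hsymm : ∀ (σ : Equiv.Perm ι) x, S (x ∘ σ) = S x) (α β : ι) :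
    (P.withDensity fun ω => g (X β ω)).map (fun ω => S fun γ => X γ ω)
      = (P.withDensity fun ω => g (X α ω)).map (fun ω => S fun γ => X γ ω) := by
  classical
  have via_joint_law (σ : Equiv.Perm ι) :
      (P.withDensity fun ω => g (X (σ α) ω)).map (fun ω => S fun γ => X γ ω)
        = ((P.map fun ω γ => X (σ γ) ω).withDensity fun x => g (x α)).map S := by
    have hV : Measurable fun ω γ => X (σ γ) ω := measurable_pi_lambda _ fun γ => hmeas (σ γ)
    have hdensity : Measurable fun x : ι → E => g (x α) := hg.comp (measurable_pi_apply α)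
    rw [← map_withDensity_comp hV hdensity, Measure.map_map hS hV]
    congr 1 with ω
    exact (hsymm σ fun γ => X γ ω).symm
  have hswap := via_joint_law (Equiv.swap α β)
  rw [hX (Equiv.swap α β), Equiv.swap_apply_left] at hswap
  exact hswap.trans (via_joint_law 1).symm

variable [Fintype ι] {X : ι → Ω → ℝ}

theorem Exchangeable.withDensity_map_sum (hX : Exchangeable X P) (hmeas : ∀ α, Measurable (X α))
    (hnonneg : ∀ α ω, 0 ≤ X α ω) (α : ι) :
    (P.map fun ω => ∑ γ, X γ ω).withDensity ENNReal.ofReal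
      = (Fintype.card ι : ℝ≥0∞) •
        (P.withDensity fun ω => ENNReal.ofReal (X α ω)).map fun ω => ∑ γ, X γ ω := by
  have hY : Measurable fun ω => ∑ γ, X γ ω := by fun_prop
  have hdensity : (fun ω => ENNReal.ofReal (∑ γ, X γ ω)) = fun ω => ∑ γ, ENNReal.ofReal (X γ ω) :=
    funext fun ω => ENNReal.ofReal_sum_of_nonneg fun γ _ => hnonneg γ ω
  have hterm (β : ι) :
      (P.withDensity fun ω => ENNReal.ofReal (X β ω)).map (fun ω => ∑ γ, X γ ω)
        = (P.withDensity fun ω => ENNReal.ofReal (X α ω)).map fun ω => ∑ γ, X γ ω :=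
    hX.map_withDensity_eq hmeas ENNReal.measurable_ofReal (S := fun x => ∑ γ, x γ) (by fun_prop)
      (fun σ x => Equiv.sum_comp σ x) α β
  rw [← map_withDensity_comp hY ENNReal.measurable_ofReal, hdensity,
    withDensity_sum_fintype fun γ => (hmeas γ).ennreal_ofReal,
    Measure.map_finset_sum hY.aemeasurable, Finset.sum_congr rfl fun β _ => hterm β,
    Finset.sum_const, Finset.card_univ, Nat.cast_smul_eq_nsmul]

theorem Exchangeable.isSizeBias_map_sum_cond [IsFiniteMeasure P] (hX : Exchangeable X P)
    (hmeas : ∀ α, Measurable (X α)) (hBer : ∀ α ω, X α ω = 0 ∨ X α ω = 1) {α : ι}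
    (hpos : P {ω | X α ω = 1} ≠ 0) :
    IsSizeBias (P.map fun ω => ∑ γ, X γ ω)
      ((P[|{ω | X α ω = 1}]).map fun ω => ∑ γ, X γ ω) := by
  have hY : Measurable fun ω => ∑ γ, X γ ω := by fun_prop
  have hnonneg (γ : ι) (ω : Ω) : 0 ≤ X γ ω := by rcases hBer γ ω with h | h <;> simp [h]
  have := cond_isProbabilityMeasure hpos
  have := Measure.isProbabilityMeasure_map (μ := P[|{ω | X α ω = 1}]) hY.aemeasurable
  apply IsSizeBias.of_withDensity_eq_smul
  rw [hX.withDensity_map_sum hmeas hnonneg α, withDensity_ofReal_eq_restrict (hmeas α) (hBer α),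
    restrict_eq_smul_cond hpos (measure_ne_top P _), Measure.map_smul, smul_smul]

theorem Exchangeable.integral_sum_smul_comp [IsFiniteMeasure P] {G : Type*}
    [NormedAddCommGroup G] [NormedSpace ℝ G] (hX : Exchangeable X P) (hmeas : ∀ α, Measurable (X α))
    (hBer : ∀ α ω, X α ω = 0 ∨ X α ω = 1) {α : ι} (hpos : P {ω | X α ω = 1} ≠ 0)
    {Ω' : Type*} [MeasurableSpace Ω'] {P' : Measure Ω'} {Ys : Ω' → ℝ}
    (hYs : P'.map Ys = (P[|{ω | X α ω = 1}]).map fun ω => ∑ γ, X γ ω)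
    {f : ℝ → G} (hf : StronglyMeasurable f) :
    ∫ ω, (∑ γ, X γ ω) • f (∑ γ, X γ ω) ∂P
      = (∫ ω, ∑ γ, X γ ω ∂P) • ∫ ω', f (Ys ω') ∂P' := by
  have hY : Measurable fun ω => ∑ γ, X γ ω := by fun_prop
  have hlaw : IsProbabilityMeasure (P'.map Ys) := by
    have := cond_isProbabilityMeasure hpos
    exact hYs ▸ Measure.isProbabilityMeasure_map hY.aemeasurable
  have hbias : IsSizeBias (P.map fun ω => ∑ γ, X γ ω) (P'.map Ys) :=
    hYs ▸ hX.isSizeBias_map_sum_cond hmeas hBer hpos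
  refine hbias.integral_smul_comp hY.aemeasurable (aemeasurable_of_map_neZero inferInstance)
    (.of_forall fun ω => Finset.sum_nonneg fun γ _ => ?_) hf
  rcases hBer γ ω with h | h <;> simp [h]

end Exchangeable

theorem sizeBias_exchangeable_sum_general {Ω : Type*} [MeasurableSpace Ω]
    (P : Measure Ω) [IsFiniteMeasure P] {ι : Type*} [Fintype ι] [Nonempty ι]
    (X : ι → Ω → ℝ) (hmeas : ∀ α, Measurable (X α)) (hBer : ∀ α ω, X α ω = 0 ∨ X α ω = 1)
    (hX : Exchangeable X P) (hpos : ∀ α, 0 < P {ω | X α ω = 1})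
    (Y : Ω → ℝ) (hY : Y = fun ω => ∑ α, X α ω) :
    (∀ α : ι, ∀ f : ℝ → ℝ, Measurable f →
      ∫ ω, Y ω * f (Y ω) ∂P
        = (∫ ω, Y ω ∂P) * ∫ ω, f (Y ω) ∂(P[|{ω | X α ω = 1}])) ∧
    (∀ (Ω' : Type*) (_ : MeasurableSpace Ω') (P' : Measure Ω') (Ys : Ω' → ℝ) (α : ι),
      P'.map Ys = (P[|{ω | X α ω = 1}]).map Y →
      ∀ f : ℝ → ℝ, Measurable f →
        ∫ ω, Y ω * f (Y ω) ∂P = (∫ ω, Y ω ∂P) * ∫ ω', f (Ys ω') ∂P') ∧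
    (∀ (Ω' : Type*) (_ : MeasurableSpace Ω') (P' : Measure Ω') (Ys : ι → Ω' → ℝ),
      (∀ α, P'.map (Ys α) = (P[|{ω | X α ω = 1}]).map Y) →
      ∀ f : ℝ → ℝ, Measurable f →
        ∫ ω, Y ω * f (Y ω) ∂P
          = (∫ ω, Y ω ∂P) * ((Fintype.card ι : ℝ)⁻¹ * ∑ α, ∫ ω', f (Ys α ω') ∂P')) := by
  subst hY
  refine ⟨fun α f hf => ?_, fun Ω' _ P' Ys α hYs f hf => ?_, fun Ω' _ P' Ys hYs f hf => ?_⟩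
  · exact hX.integral_sum_smul_comp hmeas hBer (hpos α).ne' rfl hf.stronglyMeasurable
  · exact hX.integral_sum_smul_comp hmeas hBer (hpos α).ne' hYs hf.stronglyMeasurable
  · have hterm (α : ι) : (∫ ω, ∑ γ, X γ ω ∂P) * ∫ ω', f (Ys α ω') ∂P'
        = ∫ ω, (∑ γ, X γ ω) * f (∑ γ, X γ ω) ∂P :=
      (hX.integral_sum_smul_comp hmeas hBer (hpos α).ne' (hYs α) hf.stronglyMeasurable).symm
    have hcard : (Fintype.card ι : ℝ) ≠ 0 := Nat.cast_ne_zero.2 Fintype.card_ne_zero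
    rw [mul_left_comm, Finset.mul_sum, Finset.sum_congr rfl fun α _ => hterm α, Finset.sum_const,
      Finset.card_univ, nsmul_eq_mul, inv_mul_cancel_left₀ hcard]

/-- Lemma 2.1: size biasing a finite sum of exchangeable Bernoulli variables.
If `Y = Σ_α X_α` with the `X_α` exchangeable Bernoulli variables of positive mean,
then for every `α` and bounded `f`, `E[Y f(Y)] = E[Y] · E[f(Y) | X_α = 1]`;
consequently any `Y^α` distributed as `Y` conditioned on `X_α = 1` has the `Y`-size
bias distribution, and so does the uniform mixture `Y^I` of the `Y^α`. -/
theorem sizeBias_exchangeable_sum {Ω : Type*} [MeasurableSpace Ω]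
    (P : Measure Ω) [IsProbabilityMeasure P]
    {ι : Type*} [Fintype ι] [Nonempty ι]
    (X : ι → Ω → ℝ) (hmeas : ∀ α, Measurable (X α))
    (hBer : ∀ α ω, X α ω = 0 ∨ X α ω = 1)
    (hexch : ∀ σ : Equiv.Perm ι,
      Measure.map (fun ω => fun α => X (σ α) ω) P
        = Measure.map (fun ω => fun α => X α ω) P)
    (hpos : ∀ α, 0 < P {ω | X α ω = 1})
    (Y : Ω → ℝ) (hY : Y = fun ω => ∑ α, X α ω) :
    -- `E[Y f(Y)] = E[Y] · E[f(Y) | X_α = 1]` for every index `α` and bounded `f`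
    (∀ α : ι, ∀ f : ℝ → ℝ, Measurable f → (∃ M, ∀ x, |f x| ≤ M) →
      ∫ ω, Y ω * f (Y ω) ∂P
        = (∫ ω, Y ω ∂P) * ∫ ω, f (Y ω) ∂(P[|{ω | X α ω = 1}])) ∧
    -- any `Y^α` with the conditional distribution of `Y` given `X_α = 1` has the
    -- `Y`-size bias distribution
    (∀ (Ω' : Type) (mΩ' : MeasurableSpace Ω') (P' : Measure Ω'),
      IsProbabilityMeasure P' →
      ∀ (Ys : Ω' → ℝ) (α : ι),
        Measure.map Ys P' = Measure.map Y (P[|{ω | X α ω = 1}]) →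
        ∀ f : ℝ → ℝ, Measurable f → (∃ M, ∀ x, |f x| ≤ M) →
          ∫ ω, Y ω * f (Y ω) ∂P = (∫ ω, Y ω ∂P) * ∫ ω', f (Ys ω') ∂P') ∧
    -- the mixture `Y^I`, with `I` uniform on `ι` and independent of all else, also
    -- has the `Y`-size bias distribution
    (∀ (Ω' : Type) (mΩ' : MeasurableSpace Ω') (P' : Measure Ω'),
      IsProbabilityMeasure P' →
      ∀ (Ys : ι → Ω' → ℝ),
        (∀ α, Measure.map (Ys α) P' = Measure.map Y (P[|{ω | X α ω = 1}])) →
        ∀ f : ℝ → ℝ, Measurable f → (∃ M, ∀ x, |f x| ≤ M) →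
          ∫ ω, Y ω * f (Y ω) ∂P
            = (∫ ω, Y ω ∂P)
              * ((Fintype.card ι : ℝ)⁻¹ * ∑ α : ι, ∫ ω', f (Ys α ω') ∂P')) := by
  obtain ⟨hcond, hlaw, hmix⟩ := sizeBias_exchangeable_sum_general P X hmeas hBer hexch hpos Y hY
  exact ⟨fun α f hf _ => hcond α f hf,
    fun Ω' mΩ' P' _ Ys α hYs f hf _ => hlaw Ω' mΩ' P' Ys α hYs f hf,
    fun Ω' mΩ' P' _ Ys hYs f hf _ => hmix Ω' mΩ' P' Ys hYs f hf⟩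
end

section
/- Let d ≥ 2 be an integer, and define τ_d(x) = e^{−x} x^d / d! and φ_d(x) = 1 − τ_d(x) − τ_d(x)(x−d)²/x for x > 0. Then the infimum of φ_d(x) over all x > 0 is strictly positive. -/
/-- The Poisson(x) probability of the value `d`: `τ_d(x) = e^{−x} x^d / d!`. -/
noncomputable def tauP (d : ℕ) (x : ℝ) : ℝ := Real.exp (-x) * x ^ d / d.factorial

/-- `φ_d(x) = 1 − τ_d(x) − τ_d(x)(x−d)²/x`. -/
noncomputable def phiP (d : ℕ) (x : ℝ) : ℝ :=
  1 - tauP d x - tauP d x * (x - (d : ℝ)) ^ 2 / x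

/-!
With `b = (d - x) / x`, the affine function `k ↦ 1 + b * (k - x)` of a Poisson variable `N` of
mean and variance `x` takes at `k = d` the value `A = 1 + (d - x) ^ 2 / x`, which is also the second
moment of `1 + b * (N - x)`. Keeping only the term `k = d` of that moment gives
`τ_d(x) * A ^ 2 < A`, strictly because an affine function with value `1` at the mean cannot vanish
at all `k ≠ d`. Hence `φ_d(x) = 1 - τ_d(x) * A > 0`. For `d ≥ 2` both `τ_d` and `τ_{d-1}` vanish
at `0`, so `φ_d` tends to `1` at both ends of `(0, ∞)`, and compactness in between yields the
uniform bound.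
-/

open Filter Set Topology

section LowerBound

variable {α β : Type*} [ConditionallyCompleteLinearOrder α] [NoMaxOrder α] [TopologicalSpace α]
  [OrderTopology α] [LinearOrder β] [DenselyOrdered β] [NoMaxOrder β] [TopologicalSpace β]
  [OrderTopology β]

lemma exists_lt_forall_mem_Ioi_le_of_tendsto {f : α → β} {a : α} {b l r : β}
    (hf : ContinuousOn f (Ioi a)) (hbf : ∀ x ∈ Ioi a, b < f x)
    (hl : Tendsto f (𝓝[>] a) (𝓝 l)) (hbl : b < l) (hr : Tendsto f atTop (𝓝 r)) (hbr : b < r) :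
    ∃ c, b < c ∧ ∀ x ∈ Ioi a, c ≤ f x := by
  obtain ⟨c, hbc, hc⟩ := exists_between (lt_min hbl hbr)
  obtain ⟨u, hau, hu⟩ := mem_nhdsGT_iff_exists_Ioo_subset.mp
    (hl.eventually_const_lt (hc.trans_le (min_le_left l r)))
  obtain ⟨v, hv⟩ := eventually_atTop.mp
    (hr.eventually_const_lt (hc.trans_le (min_le_right l r)))
  have hsub : Icc u v ⊆ Ioi a := fun x hx => lt_of_lt_of_le hau hx.1
  obtain ⟨c', hbc', hc'⟩ :=
    isCompact_Icc.exists_forall_le' (hf.mono hsub) fun x hx => hbf x (hsub hx)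
  refine ⟨min c c', lt_min hbc hbc', fun x hx => ?_⟩
  rcases lt_or_ge x u with hxu | hux
  · exact (min_le_left c c').trans (hu ⟨hx, hxu⟩).le
  rcases le_total x v with hxv | hvx
  · exact (min_le_right c c').trans (hc' x ⟨hux, hxv⟩)
  · exact (min_le_left c c').trans (hv x hvx).le

end LowerBound

section Moments

variable {ι : Type*} {p f : ι → ℝ} {m v : ℝ}

lemma hasSum_mul_one_add_mul_sub_sq (hmass : HasSum p 1) (hmean : HasSum (fun i => p i * f i) m)
    (hvar : HasSum (fun i => p i * (f i - m) ^ 2) v) (b : ℝ) :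
    HasSum (fun i => p i * (1 + b * (f i - m)) ^ 2) (1 + b ^ 2 * v) := by
  have hcentered : HasSum (fun i => p i * (f i - m)) 0 := by
    simpa [mul_sub] using hmean.sub (hmass.mul_right m)
  convert! (hmass.add (hcentered.mul_left (2 * b))).add (hvar.mul_left (b ^ 2)) using 1
  · ext i
    ring
  · ring

lemma mul_one_add_sq_div_lt_one_of_hasSum (hp : ∀ i, 0 ≤ p i) (hmass : HasSum p 1)
    (hmean : HasSum (fun i => p i * f i) m) (hvar : HasSum (fun i => p i * (f i - m) ^ 2) v)
    (hv : 0 < v) {i j k : ι} (hji : j ≠ i) (hki : k ≠ i) (hpj : 0 < p j) (hpk : 0 < p k)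
    (hjk : f j ≠ f k) : p i * (1 + (f i - m) ^ 2 / v) < 1 := by
  set b : ℝ := (f i - m) / v with hb
  set A : ℝ := 1 + (f i - m) ^ 2 / v with hA
  have hA_pos : 0 < A := by positivity
  have hA_value : 1 + b * (f i - m) = A := by rw [hA, hb]; ring
  have hA_moment : 1 + b ^ 2 * v = A := by rw [hA, hb]; field_simp
  obtain ⟨l, hli, hl⟩ : ∃ l, l ≠ i ∧ 0 < p l * (1 + b * (f l - m)) ^ 2 := by
    by_cases hj : 1 + b * (f j - m) = 0
    · have hk : 1 + b * (f k - m) ≠ 0 := fun hk => by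
        have hb_mul : b * (f j - f k) = 0 := by linarith
        have hb_zero : b = 0 := (mul_eq_zero.mp hb_mul).resolve_right (sub_ne_zero.mpr hjk)
        simp [hb_zero] at hj
      exact ⟨k, hki, by positivity⟩
    · exact ⟨j, hji, by positivity⟩
  have hlt : p i * (1 + b * (f i - m)) ^ 2 < 1 + b ^ 2 * v :=
    lt_hasSum (hasSum_mul_one_add_mul_sub_sq hmass hmean hvar b) i
      (fun n _ => mul_nonneg (hp n) (sq_nonneg _)) l hli hl
  rw [hA_value, hA_moment] at hlt
  exact lt_of_mul_lt_mul_right (by linarith) hA_pos.le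

end Moments

section Poisson

lemma tauP_pos (d : ℕ) {x : ℝ} (hx : 0 < x) : 0 < tauP d x := by
  unfold tauP
  positivity

lemma continuous_tauP (d : ℕ) : Continuous (tauP d) := by
  unfold tauP
  fun_prop

lemma succ_mul_tauP_succ (d : ℕ) (x : ℝ) : (d + 1) * tauP (d + 1) x = x * tauP d x := by
  simp only [tauP, Nat.factorial_succ, Nat.cast_mul, Nat.cast_succ]
  field_simp
  ring

lemma tauP_succ_zero (d : ℕ) : tauP (d + 1) 0 = 0 := by
  simp [tauP]

lemma tendsto_tauP_mul_pow_atTop (d n : ℕ) :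
    Tendsto (fun x => tauP d x * x ^ n) atTop (𝓝 0) := by
  have h := (Real.tendsto_pow_mul_exp_neg_atTop_nhds_zero (d + n)).div_const (d.factorial : ℝ)
  rw [zero_div] at h
  refine h.congr fun x => ?_
  rw [tauP]
  ring

lemma hasSum_tauP (x : ℝ) : HasSum (fun k => tauP k x) 1 := by
  have h := (NormedSpace.expSeries_div_hasSum_exp x).mul_left (Real.exp (-x))
  rw [← Real.exp_eq_exp_ℝ, ← Real.exp_add, neg_add_cancel, Real.exp_zero] at h
  simpa only [tauP, mul_div_assoc] using h

lemma hasSum_tauP_mul_natCast_mul {f : ℕ → ℝ} {x s : ℝ}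
    (h : HasSum (fun k => tauP k x * f (k + 1)) s) :
    HasSum (fun k => tauP k x * (k * f k)) (x * s) := by
  rw [← hasSum_nat_add_iff' 1]
  convert! h.mul_left x using 1
  · ext k
    rw [← mul_assoc x, ← succ_mul_tauP_succ, Nat.cast_succ]
    ring
  · simp

lemma hasSum_tauP_mul_natCast (x : ℝ) : HasSum (fun k => tauP k x * k) x := by
  simpa using
    hasSum_tauP_mul_natCast_mul (f := fun _ => 1) (s := 1) (by simpa using hasSum_tauP x)

lemma hasSum_tauP_mul_natCast_sub_sq (x : ℝ) : HasSum (fun k => tauP k x * (k - x) ^ 2) x := by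
  have hshift : HasSum (fun k => tauP k x * ((k + 1 : ℕ) : ℝ)) (x + 1) := by
    simpa [mul_add] using (hasSum_tauP_mul_natCast x).add (hasSum_tauP x)
  have hsq : HasSum (fun k => tauP k x * (k * k)) (x * (x + 1)) :=
    hasSum_tauP_mul_natCast_mul hshift
  convert! (hsq.sub ((hasSum_tauP_mul_natCast x).mul_left (2 * x))).add
    ((hasSum_tauP x).mul_left (x ^ 2)) using 1
  · ext k
    ring
  · ring

end Poisson

lemma phiP_pos (d : ℕ) {x : ℝ} (hx : 0 < x) : 0 < phiP d x := by
  have h : tauP d x * (1 + (d - x) ^ 2 / x) < 1 :=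
    mul_one_add_sq_div_lt_one_of_hasSum (f := Nat.cast) (j := d + 1) (k := d + 2)
      (fun k => (tauP_pos k hx).le) (hasSum_tauP x) (hasSum_tauP_mul_natCast x)
      (hasSum_tauP_mul_natCast_sub_sq x) hx (by simp) (by simp) (tauP_pos _ hx) (tauP_pos _ hx)
      (by simp)
  calc
    0 < 1 - tauP d x * (1 + (d - x) ^ 2 / x) := sub_pos.mpr h
    _ = phiP d x := by rw [phiP]; ring

lemma continuousOn_phiP (d : ℕ) : ContinuousOn (phiP d) (Ioi 0) := by
  have hτ := (continuous_tauP d).continuousOn (s := Ioi 0)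
  unfold phiP
  exact (continuousOn_const.sub hτ).sub
    ((hτ.mul (by fun_prop)).div continuousOn_id fun x hx => (mem_Ioi.mp hx).ne')

lemma phiP_succ (d : ℕ) {x : ℝ} (hx : x ≠ 0) :
    phiP (d + 1) x = 1 - tauP (d + 1) x - tauP d x * (x - (d + 1)) ^ 2 / (d + 1) := by
  have hτ : tauP (d + 1) x / x = tauP d x / (d + 1) := by
    rw [div_eq_div_iff hx (by positivity)]
    linarith [succ_mul_tauP_succ d x]
  rw [phiP, Nat.cast_succ, mul_div_right_comm, hτ]
  ring

lemma tendsto_phiP_nhdsGT_zero {d : ℕ} (hd : 2 ≤ d) : Tendsto (phiP d) (𝓝[>] 0) (𝓝 1) := by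
  obtain ⟨n, rfl⟩ := Nat.exists_eq_add_of_le' hd
  have hcont : Continuous fun x => 1 - tauP (n + 1 + 1) x -
      tauP (n + 1) x * (x - ((n + 1 : ℕ) + 1)) ^ 2 / ((n + 1 : ℕ) + 1) := by
    have := continuous_tauP
    fun_prop
  have hlim := hcont.tendsto 0
  simp only [tauP_succ_zero, zero_mul, zero_div, sub_zero] at hlim
  refine (hlim.mono_left nhdsWithin_le_nhds).congr' ?_
  filter_upwards [self_mem_nhdsWithin] with x hx
  exact (phiP_succ (n + 1) (ne_of_gt hx)).symm

lemma tendsto_phiP_atTop (d : ℕ) : Tendsto (phiP d) atTop (𝓝 1) := by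
  have hτ : Tendsto (tauP d) atTop (𝓝 0) := by simpa using tendsto_tauP_mul_pow_atTop d 0
  have hτx : Tendsto (fun x => tauP d x * x) atTop (𝓝 0) := by
    simpa using tendsto_tauP_mul_pow_atTop d 1
  have hlim : Tendsto (fun x => 1 - tauP d x -
      (tauP d x * x - 2 * d * tauP d x + d ^ 2 * (tauP d x * x⁻¹))) atTop (𝓝 1) := by
    simpa using (hτ.const_sub 1).sub ((hτx.sub (hτ.const_mul (2 * (d : ℝ)))).add
      ((hτ.mul tendsto_inv_atTop_zero).const_mul ((d : ℝ) ^ 2)))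
  refine hlim.congr' ?_
  filter_upwards [eventually_ne_atTop 0] with x hx
  rw [phiP]
  field_simp
  ring

/-- Lemma 3.2, Part 3: for `d ≥ 2`, the infimum of `φ_d` over `x > 0` is strictly
positive. -/
theorem phiP_inf_pos (d : ℕ) (hd : 2 ≤ d) :
    ∃ c : ℝ, 0 < c ∧ ∀ x : ℝ, 0 < x → c ≤ phiP d x := by
  exact exists_lt_forall_mem_Ioi_le_of_tendsto (continuousOn_phiP d) (fun _ => phiP_pos d)
    (tendsto_phiP_nhdsGT_zero hd) one_pos (tendsto_phiP_atTop d) one_pos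
end

section
/- Let d ≥ 2 be an integer. Given any n*, m* and ε > 0, there exist constants r₁ and C such that every pair of integers n ≥ d, m ≥ 2 satisfying σ²_{n,m} ≥ r₁ also satisfies: (a) n > n* and m > m*; (b) n/m ≤ (1+ε) log m; and (c) μ_{n,m} ≤ C·σ²_{n,m}. -/
open MeasureTheory ProbabilityTheory

/-!
For an urn pair `{a, b}`, pour `b` into `a`. Given the resulting pooled allocation, each ball of the
pair lies in `a` or `b` by an independent fair coin toss, so the number `Z` of urns of the pair that
hold exactly `d` balls has conditional mean `q = 2 * (N.choose d) / 2 ^ N`, where `N` is the load of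
the pair. The residual `T = Z - q` is thus orthogonal to every function of the pooled allocation.

Residuals of disjoint pairs are uncorrelated, and `cov[Y, T] = Var[T]` because `Y - T` is a function
of the pooled allocation. Bessel's inequality over `m / 2` disjoint pairs gives `∑ Var[T] ≤ Var[Y]`.
For `2 ≤ d` we have `q ≤ 3 / 4`, hence `Var[T] = E[Z * (Z - q)] ≥ E[Z] / 4`, and summation yields
`E[Y] ≤ 6 * Var[Y]`.

For the other bounds, `Y ≤ m` and `Y ≤ n`. When `(1 + ε) * log m < n / m`, put `θ = ε / (1 + ε)` and
use `Y ≤ θ⁻ᵈ * ∑ θ ^ (load)`, whose second moment is bounded since `E[θ ^ load] ≤ 1 / m` and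
`E[θ ^ load * θ ^ load'] ≤ 1 / m ^ 2` for distinct urns.
-/

section Variance

variable {Ω ι : Type*} [MeasurableSpace Ω] {μ : Measure Ω} [IsFiniteMeasure μ]

lemma variance_le_variance_of_covariance_eq {X T : Ω → ℝ} (hX : MemLp X 2 μ)
    (hT : MemLp T 2 μ) (h : cov[X, T; μ] = Var[T; μ]) : Var[T; μ] ≤ Var[X; μ] := by
  have h_nonneg : 0 ≤ Var[X - T; μ] := variance_nonneg _ _
  rw [variance_sub hX hT, h] at h_nonneg
  linarith

lemma sum_variance_le_variance [Fintype ι] {X : Ω → ℝ} {T : ι → Ω → ℝ} (hX : MemLp X 2 μ)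
    (hT : ∀ i, MemLp (T i) 2 μ) (horth : Pairwise fun i j ↦ cov[T i, T j; μ] = 0)
    (hXT : ∀ i, cov[X, T i; μ] = Var[T i; μ]) : ∑ i, Var[T i; μ] ≤ Var[X; μ] := by
  have hsum : Var[∑ i, T i; μ] = ∑ i, Var[T i; μ] := by
    rw [variance_sum hT]
    refine Finset.sum_congr rfl fun i _ ↦ ?_
    rw [Finset.sum_eq_single_of_mem i (Finset.mem_univ i) fun j _ hji ↦ horth hji.symm,
      covariance_self (hT i).aemeasurable]
  have hcov : cov[X, ∑ i, T i; μ] = Var[∑ i, T i; μ] := by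
    rw [covariance_sum_right hT hX, hsum, Finset.sum_congr rfl fun i _ ↦ hXT i]
  exact hsum ▸ variance_le_variance_of_covariance_eq hX (memLp_finsetSum' _ fun i _ ↦ hT i) hcov

end Variance

/-- The binomial probability that exactly `d` of `N` fair coins show heads. -/
noncomputable def fairBinomial (N d : ℕ) : ℝ := N.choose d / 2 ^ N

lemma eight_mul_choose_le {N : ℕ} (hN : 3 ≤ N) (d : ℕ) : 8 * N.choose d ≤ 3 * 2 ^ N := by
  induction N, hN using Nat.le_induction generalizing d with
  | base => have := Nat.choose_le_middle d 3; norm_num [Nat.choose] at this ⊢; omega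
  | succ N _ ih =>
    cases d with
    | zero => simpa using (ih 0).trans (by gcongr <;> simp)
    | succ d => rw [Nat.choose_succ_succ, pow_succ]; linarith [ih d, ih (d + 1)]

lemma fairBinomial_le_three_eighths {d : ℕ} (hd : 2 ≤ d) (N : ℕ) : fairBinomial N d ≤ 3 / 8 := by
  have h : 8 * N.choose d ≤ 3 * 2 ^ N := by
    rcases Nat.lt_or_ge N d with hNd | hdN
    · simp [Nat.choose_eq_zero_of_lt hNd]
    rcases Nat.lt_or_ge N 3 with hN | hN
    · obtain ⟨rfl, rfl⟩ : N = 2 ∧ d = 2 := by omega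
      simp
    · exact eight_mul_choose_le hN d
  have h' : (8 : ℝ) * N.choose d ≤ 3 * 2 ^ N := mod_cast h
  rw [fairBinomial, div_le_iff₀ (by positivity)]
  linarith

namespace Occupancy

variable {n m d : ℕ} {a b : Fin m}

section Basic

instance isProbabilityMeasure_occ [NeZero m] : IsProbabilityMeasure (occ n m) where
  measure_univ := by
    rw [occ, Measure.smul_apply, Measure.count_univ, smul_eq_mul, ENat.card_eq_coe_fintype_card]
    exact ENNReal.inv_mul_cancel (by simp [NeZero.ne m]) (by simp)

lemma integral_occ (f : (Fin n → Fin m) → ℝ) :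
    ∫ ω, f ω ∂occ n m = (∑ ω, f ω) / (m : ℝ) ^ n := by
  rw [occ, integral_smul_measure, integral_fintype .of_finite]
  simp [Measure.real, div_eq_inv_mul]

/-- The indicator that urn `e` holds exactly `d` balls. -/
def loadInd (d : ℕ) (e : Fin m) (ω : Fin n → Fin m) : ℝ := if ballCount ω e = d then 1 else 0

lemma urnCount_eq_sum (d : ℕ) (ω : Fin n → Fin m) : (urnCount d ω : ℝ) = ∑ e, loadInd d e ω := by
  simp [urnCount, loadInd]

lemma sum_ballCount (ω : Fin n → Fin m) : ∑ e, ballCount ω e = n := by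
  simpa [ballCount] using
    (Finset.card_eq_sum_card_fiberwise (f := ω) (s := .univ) (t := .univ) (by simp)).symm

lemma urnCount_le_urns (d : ℕ) (ω : Fin n → Fin m) : urnCount d ω ≤ m :=
  (Finset.card_filter_le _ _).trans (by simp)

lemma mul_urnCount_le_balls (d : ℕ) (ω : Fin n → Fin m) : d * urnCount d ω ≤ n := by
  calc d * urnCount d ω = ∑ e with ballCount ω e = d, ballCount ω e := by
        rw [Finset.sum_congr rfl fun e he ↦ (Finset.mem_filter.mp he).2]
        simp [urnCount, mul_comm]
    _ ≤ ∑ e, ballCount ω e := Finset.sum_le_sum_of_subset (Finset.filter_subset _ _)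
    _ = n := sum_ballCount ω

end Basic

section Pooling

/-- The allocation obtained from `ω` by pouring urn `b` into urn `a`. Knowing `poolUrns a b ω` means
knowing everything about `ω` except which balls of the pair `{a, b}` lie in which of the two. -/
def poolUrns (a b : Fin m) (ω : Fin n → Fin m) : Fin n → Fin m :=
  fun β ↦ if ω β = b then a else ω β

/-- `F` depends on `ω` only through the pooled allocation `poolUrns a b ω`. -/
def PoolInvariant (a b : Fin m) (F : (Fin n → Fin m) → ℝ) : Prop :=
  ∀ ω, F (poolUrns a b ω) = F ω

lemma poolUrns_poolUrns_swap (a b : Fin m) (ω : Fin n → Fin m) :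
    poolUrns a b (poolUrns b a ω) = poolUrns a b ω := by
  ext β
  simp only [poolUrns]
  split_ifs <;> simp_all

lemma PoolInvariant.symm {F : (Fin n → Fin m) → ℝ} (hF : PoolInvariant a b F) :
    PoolInvariant b a F := fun ω ↦ by
  rw [← hF, poolUrns_poolUrns_swap, hF]

lemma ballCount_poolUrns_of_ne {e : Fin m} (ha : e ≠ a) (hb : e ≠ b) (ω : Fin n → Fin m) :
    ballCount (poolUrns a b ω) e = ballCount ω e := by
  unfold ballCount poolUrns
  congr 1 with β
  grind

lemma ballCount_poolUrns_left (hab : a ≠ b) (ω : Fin n → Fin m) :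
    ballCount (poolUrns a b ω) a = ballCount ω a + ballCount ω b := by
  unfold ballCount poolUrns
  rw [← Finset.card_union_of_disjoint (by grind [Finset.disjoint_left])]
  congr 1 with β
  grind

lemma ballCount_poolUrns_right (hab : a ≠ b) (ω : Fin n → Fin m) :
    ballCount (poolUrns a b ω) b = 0 := by
  rw [ballCount, Finset.card_eq_zero, Finset.filter_eq_empty_iff]
  grind [poolUrns]

lemma poolInvariant_of_pairLoad (hab : a ≠ b) (f : ℕ → ℝ) :
    PoolInvariant (n := n) a b fun ω ↦ f (ballCount ω a + ballCount ω b) := fun ω ↦ by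
  simp only [ballCount_poolUrns_left hab, ballCount_poolUrns_right hab, add_zero]

lemma poolInvariant_loadInd {e : Fin m} (ha : e ≠ a) (hb : e ≠ b) (d : ℕ) :
    PoolInvariant (n := n) a b (loadInd d e) := fun ω ↦ by
  simp only [loadInd, ballCount_poolUrns_of_ne ha hb]

/-- An allocation with given pooling `η` is determined by the set of balls it puts into `a`, an
arbitrary subset of those that `η` puts there. -/
lemma sum_poolUrns_fiber (hab : a ≠ b) {η : Fin n → Fin m} (hη : ∀ β, η β ≠ b) (f : ℕ → ℝ) :
    ∑ ω with poolUrns a b ω = η, f (ballCount ω a)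
      = ∑ S ∈ (Finset.univ.filter fun β ↦ η β = a).powerset, f S.card := by
  refine Finset.sum_bij' (fun ω _ ↦ Finset.univ.filter fun β ↦ ω β = a)
    (fun S _ β ↦ if β ∈ S then a else if η β = a then b else η β) ?_ ?_ ?_ ?_ ?_
  · simp only [Finset.mem_filter, Finset.mem_univ, true_and, Finset.mem_powerset]
    rintro ω rfl β
    simp +contextual [poolUrns, hab]
  · intro S hS
    simp only [Finset.mem_powerset, Finset.subset_iff, Finset.mem_filter] at hS
    simp only [Finset.mem_filter, Finset.mem_univ, true_and]
    ext β
    grind [poolUrns]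
  · simp only [Finset.mem_filter, Finset.mem_univ, true_and]
    rintro ω rfl
    ext β
    grind [poolUrns]
  · intro S hS
    simp only [Finset.mem_powerset, Finset.subset_iff, Finset.mem_filter] at hS
    grind
  · simp [ballCount]

lemma sum_powerset_sub_fairBinomial_eq_zero {α : Type*} (P : Finset α) (d : ℕ) :
    ∑ S ∈ P.powerset, ((if S.card = d then 1 else 0) - fairBinomial P.card d) = 0 := by
  rw [Finset.sum_sub_distrib, Finset.sum_boole, ← Finset.powersetCard_eq_filter,
    Finset.card_powersetCard, Finset.sum_const, Finset.card_powerset, nsmul_eq_mul, fairBinomial]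
  push_cast
  field_simp
  simp

/-- In other words, `fairBinomial (ballCount ω a + ballCount ω b) d` is the conditional expectation
of `loadInd d a` given the pooled allocation. -/
lemma sum_mul_loadInd_sub_fairBinomial_eq_zero (hab : a ≠ b) {F : (Fin n → Fin m) → ℝ}
    (hF : PoolInvariant a b F) (d : ℕ) :
    ∑ ω, F ω * (loadInd d a ω - fairBinomial (ballCount ω a + ballCount ω b) d) = 0 := by
  rw [← Finset.sum_fiberwise _ (poolUrns a b)]
  refine Finset.sum_eq_zero fun η _ ↦ ?_
  by_cases hη : ∀ β, η β ≠ b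
  · calc ∑ ω with poolUrns a b ω = η,
          F ω * (loadInd d a ω - fairBinomial (ballCount ω a + ballCount ω b) d)
        = F η * ∑ ω with poolUrns a b ω = η,
            ((if ballCount ω a = d then 1 else 0) - fairBinomial (ballCount η a) d) := by
          rw [Finset.mul_sum]
          refine Finset.sum_congr rfl fun ω hω ↦ ?_
          obtain rfl := (Finset.mem_filter.mp hω).2
          rw [hF, ballCount_poolUrns_left hab, loadInd]
      _ = 0 := by
          rw [sum_poolUrns_fiber hab hη fun k ↦
            (if k = d then 1 else 0) - fairBinomial (ballCount η a) d]
          exact mul_eq_zero_of_right _ (sum_powerset_sub_fairBinomial_eq_zero _ d)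
  · rw [Finset.filter_false_of_mem, Finset.sum_empty]
    rintro ω - rfl
    exact hη fun β ↦ by simp only [poolUrns]; split_ifs <;> assumption

lemma integral_loadInd_eq (d : ℕ) (a b : Fin m) :
    ∫ ω, loadInd d a ω ∂occ n m = ∫ ω, loadInd d b ω ∂occ n m := by
  rcases eq_or_ne a b with rfl | hab
  · rfl
  have h1 (a b : Fin m) : PoolInvariant (n := n) a b fun _ ↦ 1 := fun _ ↦ rfl
  have ha := sum_mul_loadInd_sub_fairBinomial_eq_zero hab (h1 a b) d
  have hb := sum_mul_loadInd_sub_fairBinomial_eq_zero hab.symm (h1 b a) d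
  simp only [one_mul, Finset.sum_sub_distrib, add_comm (ballCount _ b)] at ha hb
  rw [integral_occ, integral_occ, sub_eq_zero.mp ha, sub_eq_zero.mp hb]

lemma occMean_eq_mul_integral_loadInd (d : ℕ) (a : Fin m) :
    occMean d n m = m * ∫ ω, loadInd d a ω ∂occ n m := by
  have : NeZero m := ⟨a.pos.ne'⟩
  simp only [occMean, urnCount_eq_sum]
  rw [integral_finsetSum _ fun _ _ ↦ .of_finite, Finset.sum_congr rfl fun e _ ↦
    integral_loadInd_eq d e a]
  simp

end Pooling

section Pair

/-- The number of urns of the pair `{a, b}` that hold exactly `d` balls. -/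
def pairCount (d : ℕ) (a b : Fin m) (ω : Fin n → Fin m) : ℝ := loadInd d a ω + loadInd d b ω

/-- `pairCount` minus its conditional expectation given the pooled allocation `poolUrns a b ω`. -/
noncomputable def pairResidual (d : ℕ) (a b : Fin m) (ω : Fin n → Fin m) : ℝ :=
  pairCount d a b ω - 2 * fairBinomial (ballCount ω a + ballCount ω b) d

lemma integral_mul_pairResidual_eq_zero (hab : a ≠ b) {F : (Fin n → Fin m) → ℝ}
    (hF : PoolInvariant a b F) (d : ℕ) : ∫ ω, F ω * pairResidual d a b ω ∂occ n m = 0 := by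
  have ha := sum_mul_loadInd_sub_fairBinomial_eq_zero hab hF d
  have hb := sum_mul_loadInd_sub_fairBinomial_eq_zero hab.symm hF.symm d
  rw [integral_occ, div_eq_zero_iff]
  left
  rw [← add_zero (0 : ℝ), ← congrArg₂ (· + ·) ha hb, ← Finset.sum_add_distrib]
  refine Finset.sum_congr rfl fun ω _ ↦ ?_
  rw [pairResidual, pairCount, add_comm (ballCount ω b)]
  ring

lemma integral_pairResidual_eq_zero (hab : a ≠ b) (d : ℕ) :
    ∫ ω, pairResidual d a b ω ∂occ n m = 0 := by
  simpa using integral_mul_pairResidual_eq_zero (n := n) hab (F := fun _ ↦ 1) (fun _ ↦ rfl) d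

lemma covariance_pairResidual_eq_integral [NeZero m] (hab : a ≠ b) (X : (Fin n → Fin m) → ℝ)
    (d : ℕ) : cov[X, pairResidual d a b; occ n m] = ∫ ω, X ω * pairResidual d a b ω ∂occ n m := by
  rw [covariance_eq_sub .of_discrete .of_discrete, integral_pairResidual_eq_zero hab, mul_zero,
    sub_zero]
  rfl

lemma covariance_pairResidual_eq_zero [NeZero m] (hab : a ≠ b) {F : (Fin n → Fin m) → ℝ}
    (hF : PoolInvariant a b F) (d : ℕ) : cov[F, pairResidual d a b; occ n m] = 0 := by
  rw [covariance_pairResidual_eq_integral hab, integral_mul_pairResidual_eq_zero hab hF]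

lemma covariance_pairResidual_eq_variance [NeZero m] (hab : a ≠ b) {X : (Fin n → Fin m) → ℝ}
    (hX : PoolInvariant a b fun ω ↦ X ω - pairResidual d a b ω) :
    cov[X, pairResidual d a b; occ n m] = Var[pairResidual d a b; occ n m] := by
  have h := covariance_pairResidual_eq_zero hab hX d
  rwa [covariance_fun_sub_left .of_discrete .of_discrete .of_discrete,
    covariance_self (measurable_of_finite _).aemeasurable, sub_eq_zero] at h

lemma poolInvariant_pairCount_sub_pairResidual (hab : a ≠ b) (d : ℕ) :
    PoolInvariant (n := n) a b fun ω ↦ pairCount d a b ω - pairResidual d a b ω := by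
  simpa only [pairResidual, sub_sub_cancel] using
    poolInvariant_of_pairLoad hab fun N ↦ 2 * fairBinomial N d

lemma poolInvariant_urnCount_sub_pairResidual (hab : a ≠ b) (d : ℕ) :
    PoolInvariant (n := n) a b fun ω ↦ urnCount d ω - pairResidual d a b ω := by
  have hsplit (ω : Fin n → Fin m) : (urnCount d ω : ℝ) - pairResidual d a b ω
      = ∑ e ∈ {a, b}ᶜ, loadInd d e ω + (pairCount d a b ω - pairResidual d a b ω) := by
    rw [urnCount_eq_sum, ← Finset.sum_compl_add_sum {a, b}, Finset.sum_pair hab, pairCount,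
      add_sub_assoc]
  intro ω
  simp only [hsplit]
  refine congrArg₂ _ (Finset.sum_congr rfl fun e he ↦ ?_)
    (poolInvariant_pairCount_sub_pairResidual hab d ω)
  simp only [Finset.mem_compl, Finset.mem_insert, Finset.mem_singleton, not_or] at he
  exact poolInvariant_loadInd he.1 he.2 d ω

lemma poolInvariant_pairResidual {a' b' : Fin m} (haa : a' ≠ a) (hab : a' ≠ b) (hba : b' ≠ a)
    (hbb : b' ≠ b) (d : ℕ) : PoolInvariant (n := n) a b (pairResidual d a' b') := fun ω ↦ by
  simp only [pairResidual, pairCount, loadInd, ballCount_poolUrns_of_ne haa hab,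
    ballCount_poolUrns_of_ne hba hbb]

/-- Pointwise `pairCount ≤ pairCount ^ 2`, while its conditional expectation is at most `3 / 4`. -/
lemma pairCount_le_mul_pairResidual (hd : 2 ≤ d) (a b : Fin m) (ω : Fin n → Fin m) :
    pairCount d a b ω ≤ 4 * (pairCount d a b ω * pairResidual d a b ω) := by
  have hq := fairBinomial_le_three_eighths hd (ballCount ω a + ballCount ω b)
  unfold pairResidual pairCount loadInd
  split_ifs <;> linarith

lemma integral_pairCount_le_four_mul_variance [NeZero m] (hd : 2 ≤ d) (hab : a ≠ b) :
    ∫ ω, pairCount d a b ω ∂occ n m ≤ 4 * Var[pairResidual d a b; occ n m] := by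
  rw [← covariance_pairResidual_eq_variance hab (poolInvariant_pairCount_sub_pairResidual hab d),
    covariance_pairResidual_eq_integral hab, ← integral_const_mul]
  exact integral_mono .of_finite .of_finite (pairCount_le_mul_pairResidual hd a b)

end Pair

section MeanLeVariance

lemma sum_integral_pairCount_le_four_mul_occVar [NeZero m] {ι : Type*} [Fintype ι] (hd : 2 ≤ d)
    (v : ι ⊕ ι ↪ Fin m) :
    ∑ i, ∫ ω, pairCount d (v (.inl i)) (v (.inr i)) ω ∂occ n m ≤ 4 * occVar d n m := by
  have hv {x y : ι ⊕ ι} (hxy : x ≠ y) : v x ≠ v y := v.injective.ne hxy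
  calc ∑ i, ∫ ω, pairCount d (v (.inl i)) (v (.inr i)) ω ∂occ n m
      ≤ ∑ i, 4 * Var[pairResidual d (v (.inl i)) (v (.inr i)); occ n m] :=
        Finset.sum_le_sum fun i _ ↦ integral_pairCount_le_four_mul_variance hd (hv (by simp))
    _ ≤ 4 * occVar d n m := by
        rw [← Finset.mul_sum]
        gcongr
        refine sum_variance_le_variance .of_discrete (fun _ ↦ .of_discrete) (fun i j hij ↦ ?_)
          fun i ↦ ?_
        · exact covariance_pairResidual_eq_zero (hv (by simp)) (poolInvariant_pairResidual
            (hv (by simpa)) (hv (by simp)) (hv (by simp)) (hv (by simpa)) d) d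
        · exact covariance_pairResidual_eq_variance (hv (by simp))
            (poolInvariant_urnCount_sub_pairResidual (hv (by simp)) d)

lemma occMean_le_mul_occVar (hd : 2 ≤ d) (hm : 2 ≤ m) : occMean d n m ≤ 6 * occVar d n m := by
  have : NeZero m := ⟨by omega⟩
  obtain ⟨v⟩ : Nonempty (Fin (m / 2) ⊕ Fin (m / 2) ↪ Fin m) :=
    Function.Embedding.nonempty_of_card_le (by simp; omega)
  set p := ∫ ω, loadInd d 0 ω ∂occ n m
  have hp : 0 ≤ p := integral_nonneg fun ω ↦ by unfold loadInd; positivity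
  have hpair (i : Fin (m / 2)) :
      ∫ ω, pairCount d (v (.inl i)) (v (.inr i)) ω ∂occ n m = 2 * p := by
    simp only [pairCount]
    rw [integral_add .of_finite .of_finite, integral_loadInd_eq d _ 0,
      integral_loadInd_eq d (v (.inr i)) 0, two_mul]
  have hvar : (m / 2 : ℕ) * (2 * p) ≤ 4 * occVar d n m := by
    simpa [hpair] using sum_integral_pairCount_le_four_mul_occVar (n := n) hd v
  have hm3 : (m : ℝ) ≤ 3 * (m / 2 : ℕ) := mod_cast (by omega : m ≤ 3 * (m / 2))
  calc occMean d n m = m * p := occMean_eq_mul_integral_loadInd d 0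
    _ ≤ 3 * (m / 2 : ℕ) * p := by gcongr
    _ ≤ 6 * occVar d n m := by linarith

end MeanLeVariance

section VarianceBounds

variable [NeZero m]

lemma occVar_le_integral_sq (d : ℕ) :
    occVar d n m ≤ ∫ ω, (urnCount d ω : ℝ) ^ 2 ∂occ n m :=
  variance_le_expectation_sq (measurable_of_finite _).aestronglyMeasurable

lemma occVar_le_sq_of_urnCount_le {k : ℕ} (h : ∀ ω : Fin n → Fin m, urnCount d ω ≤ k) :
    occVar d n m ≤ (k : ℝ) ^ 2 := by
  refine (occVar_le_integral_sq d).trans ?_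
  calc ∫ ω, (urnCount d ω : ℝ) ^ 2 ∂occ n m ≤ ∫ _, (k : ℝ) ^ 2 ∂occ n m :=
        integral_mono .of_finite .of_finite fun ω ↦ by
          have : (urnCount d ω : ℝ) ≤ k := mod_cast h ω
          dsimp only
          gcongr
    _ = (k : ℝ) ^ 2 := by simp

lemma occVar_le_urns_sq (d n : ℕ) : occVar d n m ≤ (m : ℝ) ^ 2 :=
  occVar_le_sq_of_urnCount_le (urnCount_le_urns d)

lemma occVar_le_balls_sq (hd : d ≠ 0) (n : ℕ) : occVar d n m ≤ (n : ℝ) ^ 2 :=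
  occVar_le_sq_of_urnCount_le fun ω ↦
    (Nat.le_mul_of_pos_left _ (Nat.pos_of_ne_zero hd)).trans (mul_urnCount_le_balls d ω)

end VarianceBounds

section GeneratingFunction

variable {θ : ℝ}

lemma integral_prod_occ (g : Fin m → ℝ) :
    ∫ ω, ∏ β, g (ω β) ∂occ n m = ((∑ e, g e) / m) ^ n := by
  rw [integral_occ, ← Fintype.sum_pow, div_pow]

lemma pow_ballCount (θ : ℝ) (ω : Fin n → Fin m) (e : Fin m) :
    θ ^ ballCount ω e = ∏ β, if ω β = e then θ else 1 := by
  simp [Finset.prod_ite, ballCount]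

lemma integral_pow_ballCount (θ : ℝ) (a : Fin m) :
    ∫ ω, θ ^ ballCount ω a ∂occ n m = ((m - (1 - θ)) / m) ^ n := by
  have hsum : ∑ e, (if e = a then θ else 1) = m - (1 - θ) := by
    have h (e : Fin m) : (if e = a then θ else 1) = 1 - if e = a then 1 - θ else 0 := by
      split_ifs <;> ring
    simp [h]
  simp only [pow_ballCount, integral_prod_occ fun e ↦ if e = a then θ else 1, hsum]

lemma integral_pow_ballCount_mul_of_ne (θ : ℝ) (hab : a ≠ b) :
    ∫ ω, θ ^ ballCount ω a * θ ^ ballCount ω b ∂occ n m = ((m - 2 * (1 - θ)) / m) ^ n := by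
  have hsum : ∑ e, (if e = a then θ else 1) * (if e = b then θ else 1) = m - 2 * (1 - θ) := by
    have h (e : Fin m) : (if e = a then θ else 1) * (if e = b then θ else 1)
        = 1 - (if e = a then 1 - θ else 0) - if e = b then 1 - θ else 0 := by
      grind
    simp only [h, Finset.sum_sub_distrib, Finset.sum_ite_eq', Finset.mem_univ, if_true]
    simp
    ring
  simp only [pow_ballCount, ← Finset.prod_mul_distrib, ← hsum]
  exact integral_prod_occ fun e ↦ (if e = a then θ else 1) * (if e = b then θ else 1)

lemma sub_div_pow_le_exp [NeZero m] {t : ℝ} (ht : t ≤ m) :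
    ((m - t) / m) ^ n ≤ Real.exp (-(t * (n / m))) := by
  have hm : (m : ℝ) ≠ 0 := NeZero.ne _
  calc ((m - t) / m) ^ n = (1 - t / m) ^ n := by rw [sub_div, div_self hm]
    _ ≤ Real.exp (-(t / m)) ^ n :=
        pow_le_pow_left₀ (sub_nonneg.mpr (div_le_one_of_le₀ ht m.cast_nonneg))
          (Real.one_sub_le_exp_neg _) n
    _ = Real.exp (-(t * (n / m))) := by
        rw [← Real.exp_nat_mul]
        congr 1
        ring

lemma integral_pow_ballCount_mul_self_le (h0 : 0 ≤ θ) (h1 : θ ≤ 1) (a : Fin m) :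
    ∫ ω, θ ^ ballCount ω a * θ ^ ballCount ω a ∂occ n m
      ≤ Real.exp (-((1 - θ) * (n / m))) := by
  have : NeZero m := ⟨a.pos.ne'⟩
  have hm : (1 : ℝ) ≤ m := mod_cast a.pos
  calc ∫ ω, θ ^ ballCount ω a * θ ^ ballCount ω a ∂occ n m
      ≤ ∫ ω, θ ^ ballCount ω a ∂occ n m :=
        integral_mono .of_finite .of_finite fun ω ↦
          mul_le_of_le_one_left (by positivity) (pow_le_one₀ h0 h1)
    _ ≤ Real.exp (-((1 - θ) * (n / m))) := by
        rw [integral_pow_ballCount]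
        exact sub_div_pow_le_exp (by linarith)

lemma integral_pow_ballCount_mul_le_of_ne (h0 : 0 ≤ θ) (hab : a ≠ b) :
    ∫ ω, θ ^ ballCount ω a * θ ^ ballCount ω b ∂occ n m
      ≤ Real.exp (-((1 - θ) * (n / m))) ^ 2 := by
  have : NeZero m := ⟨a.pos.ne'⟩
  have hm : (2 : ℝ) ≤ m := mod_cast (by omega : 2 ≤ m)
  rw [integral_pow_ballCount_mul_of_ne θ hab]
  refine (sub_div_pow_le_exp (by linarith)).trans_eq ?_
  rw [← Real.exp_nat_mul]
  congr 1
  push_cast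
  ring

lemma integral_sum_pow_ballCount_sq_le [NeZero m] (h0 : 0 ≤ θ) (h1 : θ ≤ 1) :
    ∫ ω, (∑ e, θ ^ ballCount ω e) ^ 2 ∂occ n m
      ≤ (m * Real.exp (-((1 - θ) * (n / m)))) ^ 2 + m * Real.exp (-((1 - θ) * (n / m))) := by
  set E := Real.exp (-((1 - θ) * (n / m)))
  have hpair (a b : Fin m) : ∫ ω, θ ^ ballCount ω a * θ ^ ballCount ω b ∂occ n m
      ≤ E ^ 2 + if a = b then E else 0 := by
    split_ifs with hab
    · subst hab
      exact (integral_pow_ballCount_mul_self_le h0 h1 a).trans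
        (le_add_of_nonneg_left (sq_nonneg E))
    · simpa using integral_pow_ballCount_mul_le_of_ne h0 hab
  calc ∫ ω, (∑ e, θ ^ ballCount ω e) ^ 2 ∂occ n m
      = ∑ a, ∑ b, ∫ ω, θ ^ ballCount ω a * θ ^ ballCount ω b ∂occ n m := by
        simp only [sq, Finset.sum_mul_sum]
        rw [integral_finsetSum _ fun _ _ ↦ .of_finite]
        exact Finset.sum_congr rfl fun a _ ↦ integral_finsetSum _ fun _ _ ↦ .of_finite
    _ ≤ ∑ a : Fin m, ∑ b : Fin m, (E ^ 2 + if a = b then E else 0) := by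
        gcongr
        exact hpair _ _
    _ = (m * E) ^ 2 + m * E := by
        simp only [Finset.sum_add_distrib, Finset.sum_ite_eq, Finset.mem_univ, if_true,
          Finset.sum_const, Finset.card_univ, Fintype.card_fin, nsmul_eq_mul]
        ring

lemma urnCount_le_sum_pow_ballCount (d : ℕ) (hθ : 0 < θ) (ω : Fin n → Fin m) :
    (urnCount d ω : ℝ) ≤ (θ ^ d)⁻¹ * ∑ e, θ ^ ballCount ω e := by
  rw [urnCount_eq_sum, Finset.mul_sum]
  refine Finset.sum_le_sum fun e _ ↦ ?_
  unfold loadInd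
  split_ifs with he
  · rw [he, inv_mul_cancel₀ (by positivity)]
  · positivity

lemma occVar_le_exp [NeZero m] (d : ℕ) (h0 : 0 < θ) (h1 : θ ≤ 1) :
    occVar d n m ≤ ((θ ^ d)⁻¹) ^ 2 * ((m * Real.exp (-((1 - θ) * (n / m)))) ^ 2
      + m * Real.exp (-((1 - θ) * (n / m)))) := by
  calc occVar d n m ≤ ∫ ω, (urnCount d ω : ℝ) ^ 2 ∂occ n m := occVar_le_integral_sq d
    _ ≤ ∫ ω, ((θ ^ d)⁻¹) ^ 2 * (∑ e, θ ^ ballCount ω e) ^ 2 ∂occ n m := by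
        refine integral_mono .of_finite .of_finite fun ω ↦ ?_
        rw [← mul_pow]
        exact pow_le_pow_left₀ (Nat.cast_nonneg _) (urnCount_le_sum_pow_ballCount d h0 ω) 2
    _ ≤ _ := by
        rw [integral_const_mul]
        gcongr
        exact integral_sum_pow_ballCount_sq_le h0.le h1

lemma occVar_le_of_log_le [NeZero m] (d : ℕ) (h0 : 0 < θ) (h1 : θ ≤ 1)
    (h : Real.log m ≤ (1 - θ) * (n / m)) : occVar d n m ≤ 2 * ((θ ^ d)⁻¹) ^ 2 := by
  have hm : (0 : ℝ) < m := Nat.cast_pos.mpr (NeZero.pos m)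
  have hE : m * Real.exp (-((1 - θ) * (n / m))) ≤ 1 := by
    calc m * Real.exp (-((1 - θ) * (n / m))) ≤ m * Real.exp (-Real.log m) := by gcongr
      _ = 1 := by rw [Real.exp_neg, Real.exp_log hm, mul_inv_cancel₀ hm.ne']
  calc occVar d n m ≤ _ := occVar_le_exp d h0 h1
    _ ≤ ((θ ^ d)⁻¹) ^ 2 * (1 ^ 2 + 1) := by gcongr
    _ = 2 * ((θ ^ d)⁻¹) ^ 2 := by ring

lemma div_le_mul_log_of_lt_occVar [NeZero m] {ε : ℝ} (hε : 0 < ε)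
    (hvar : 2 * (((ε / (1 + ε)) ^ d)⁻¹) ^ 2 < occVar d n m) :
    (n : ℝ) / m ≤ (1 + ε) * Real.log m := by
  by_contra! hlog
  have hθ : 1 - ε / (1 + ε) = (1 + ε)⁻¹ := by field_simp; ring
  refine hvar.not_ge (occVar_le_of_log_le d (by positivity)
    (div_le_one_of_le₀ (le_add_of_nonneg_left zero_le_one) (by positivity)) ?_)
  rw [hθ, le_inv_mul_iff₀ (by positivity)]
  exact hlog.le

end GeneratingFunction

end Occupancy

open Occupancy

/-- Lemma 3.2, Part 4: for `d ≥ 2`, given any `n*`, `m*` and `ε > 0` there are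
constants `r₁` and `C` such that all `n ≥ d`, `m ≥ 2` with `σ²_{n,m} ≥ r₁` satisfy
(a) `n > n*` and `m > m*`; (b) `n/m ≤ (1+ε) log m`; (c) `μ_{n,m} ≤ C·σ²_{n,m}`. -/
theorem occupancy_large_variance (d : ℕ) (hd : 2 ≤ d) (nstar mstar : ℕ)
    (ε : ℝ) (hε : 0 < ε) :
    ∃ r₁ C : ℝ, ∀ n m : ℕ, d ≤ n → 2 ≤ m → r₁ ≤ occVar d n m →
      nstar < n ∧ mstar < m ∧ (n : ℝ) / m ≤ (1 + ε) * Real.log m ∧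
        occMean d n m ≤ C * occVar d n m := by
  set K : ℝ := 2 * (((ε / (1 + ε)) ^ d)⁻¹) ^ 2
  have hK : 0 ≤ K := by positivity
  have hn₀ : 0 ≤ (nstar : ℝ) ^ 2 := sq_nonneg _
  have hm₀ : 0 ≤ (mstar : ℝ) ^ 2 := sq_nonneg _
  refine ⟨nstar ^ 2 + mstar ^ 2 + K + 1, 6, fun n m _ hm hr ↦ ?_⟩
  have : NeZero m := ⟨by omega⟩
  have hn : (nstar : ℝ) < n := lt_of_pow_lt_pow_left₀ 2 n.cast_nonneg <| by
    linarith [occVar_le_balls_sq (m := m) (by omega : d ≠ 0) n]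
  have hm' : (mstar : ℝ) < m := lt_of_pow_lt_pow_left₀ 2 m.cast_nonneg <| by
    linarith [occVar_le_urns_sq (m := m) d n]
  have hK_lt : K < occVar d n m := by linarith
  exact ⟨mod_cast hn, mod_cast hm', div_le_mul_log_of_lt_occVar hε hK_lt,
    occMean_le_mul_occVar hd hm⟩
end
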